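/- arXiv:1208.2747 — 4 statements merged into one kernel-verified Lean document; each statement's English description precedes it below -/
import Mathlib

section
/- There exists a language in shuffleCFL that belongs neither to PCCFL nor to traceCFL. -/
/-- `IsInterleaving w v u` means `u` is an interleaving of `w` and `v`. -/
inductive IsInterleaving {α : Type} : List α → List α → List α → Prop
  | nil : IsInterleaving [] [] []
  | left {a : α} {w v u : List α} : IsInterleaving w v u → IsInterleaving (a :: w) v (a :: u)
  | right {a : α} {w v u : List α} : IsInterleaving w v u → IsInterleaving w (a :: v) (a :: u)

/-- Shuffle of two languages. -/
def shuffleLang {α : Type} (L K : Set (List α)) : Set (List α) :=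
  {u | ∃ w ∈ L, ∃ v ∈ K, IsInterleaving w v u}

/-- A partially-commutative context-free grammar in Greibach form. -/
structure PCGrammar (α : Type) : Type 1 where
  V : Type
  finV : Finite V
  start : V
  prods : Set (V × α × List V)
  finP : prods.Finite
  indep : V → V → Prop
  indep_symm : ∀ {X Y : V}, indep X Y → indep Y X
  indep_irrefl : ∀ X : V, ¬ indep X X

/-- `PCDerives G γ w` : configuration `γ` derives the empty configuration producing word `w`,
using production steps (at the head) and swap steps of independent adjacent nonterminals. -/
inductive PCDerives {α : Type} (G : PCGrammar α) : List G.V → List α → Prop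
  | nil : PCDerives G [] []
  | prod {X : G.V} {a : α} {γ β : List G.V} {w : List α} :
      (X, a, γ) ∈ G.prods → PCDerives G (γ ++ β) w → PCDerives G (X :: β) (a :: w)
  | swap {η β : List G.V} {X Y : G.V} {w : List α} :
      G.indep X Y → PCDerives G (η ++ Y :: X :: β) w → PCDerives G (η ++ X :: Y :: β) w

/-- The language generated by a PC-grammar. -/
def PCGrammar.lang {α : Type} (G : PCGrammar α) : Set (List α) :=
  {w | PCDerives G [G.start] w}

/-- The class of partially-commutative context-free languages. -/
def IsPCCFL {α : Type} (L : Set (List α)) : Prop :=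
  ∃ G : PCGrammar α, G.lang = L

/-- The dependence relation (complement of independence) is transitive. -/
def PCGrammar.depTransitive {α : Type} (G : PCGrammar α) : Prop :=
  ∀ X Y Z : G.V, ¬ G.indep X Y → ¬ G.indep Y Z → ¬ G.indep X Z

/-- The subclass of PCCFL given by grammars with transitive dependence. -/
def IsTrPCCFL {α : Type} (L : Set (List α)) : Prop :=
  ∃ G : PCGrammar α, G.depTransitive ∧ G.lang = L

/-- Terms of a PA-grammar (shuffle context-free grammar). -/
inductive PATerm (V : Type) : Type
  | eps : PATerm V
  | var (X : V) : PATerm V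
  | seq (t u : PATerm V) : PATerm V
  | par (t u : PATerm V) : PATerm V

/-- Structural equivalence of PA-terms: associativity of both compositions,
commutativity of parallel composition, and neutrality of the empty term. -/
inductive PAEq {V : Type} : PATerm V → PATerm V → Prop
  | refl (t : PATerm V) : PAEq t t
  | symm {t u : PATerm V} : PAEq t u → PAEq u t
  | trans {t u v : PATerm V} : PAEq t u → PAEq u v → PAEq t v
  | seq_assoc (t u v : PATerm V) : PAEq ((t.seq u).seq v) (t.seq (u.seq v))
  | par_assoc (t u v : PATerm V) : PAEq ((t.par u).par v) (t.par (u.par v))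
  | par_comm (t u : PATerm V) : PAEq (t.par u) (u.par t)
  | seq_eps_left (t : PATerm V) : PAEq (PATerm.eps.seq t) t
  | seq_eps_right (t : PATerm V) : PAEq (t.seq PATerm.eps) t
  | par_eps (t : PATerm V) : PAEq (t.par PATerm.eps) t
  | seq_congr {t t' u u' : PATerm V} : PAEq t t' → PAEq u u' → PAEq (t.seq u) (t'.seq u')
  | par_congr {t t' u u' : PATerm V} : PAEq t t' → PAEq u u' → PAEq (t.par u) (t'.par u')

/-- Single steps of a PA-grammar with production set `P`. -/
inductive PAStep {V α : Type} (P : Set (V × α × PATerm V)) : PATerm V → α → PATerm V → Prop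
  | prod {X : V} {a : α} {t : PATerm V} : (X, a, t) ∈ P → PAStep P (PATerm.var X) a t
  | seq_left {t t' u : PATerm V} {a : α} : PAStep P t a t' → PAStep P (t.seq u) a (t'.seq u)
  | par_left {t t' u : PATerm V} {a : α} : PAStep P t a t' → PAStep P (t.par u) a (t'.par u)
  | par_right {t u u' : PATerm V} {a : α} : PAStep P u a u' → PAStep P (t.par u) a (t.par u')

/-- `PAGen P t w` : term `t` derives the empty term producing word `w`
(terms are considered up to structural equivalence). -/
inductive PAGen {V α : Type} (P : Set (V × α × PATerm V)) : PATerm V → List α → Prop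
  | done : PAGen P PATerm.eps []
  | eqv {t t' : PATerm V} {w : List α} : PAEq t t' → PAGen P t' w → PAGen P t w
  | step {t t' : PATerm V} {a : α} {w : List α} :
      PAStep P t a t' → PAGen P t' w → PAGen P t (a :: w)

/-- A PA-grammar (shuffle context-free grammar). -/
structure PAGrammar (α : Type) : Type 1 where
  V : Type
  finV : Finite V
  start : V
  prods : Set (V × α × PATerm V)
  finP : prods.Finite

/-- The language generated by a PA-grammar. -/
def PAGrammar.lang {α : Type} (G : PAGrammar α) : Set (List α) :=
  {w | PAGen G.prods (PATerm.var G.start) w}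

/-- The class of languages of PA-grammars (context-free grammars with shuffle). -/
def IsShuffleCFL {α : Type} (L : Set (List α)) : Prop :=
  ∃ G : PAGrammar α, G.lang = L

/-- A single swap of two adjacent letters independent according to `J`. -/
inductive AdjSwap {α : Type} (J : α → α → Prop) : List α → List α → Prop
  | swap (x y : List α) {a b : α} : J a b → AdjSwap J (x ++ a :: b :: y) (x ++ b :: a :: y)

/-- Trace equivalence: finitely many swaps of adjacent independent letters. -/
def TraceEquiv {α : Type} (J : α → α → Prop) : List α → List α → Prop :=
  Relation.ReflTransGen (AdjSwap J)

/-- Trace closure of a language with respect to letter-independence `J`. -/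
def traceClosure {α : Type} (J : α → α → Prop) (L : Set (List α)) : Set (List α) :=
  {w | ∃ v ∈ L, TraceEquiv J v w}

/-- The class of trace closures of context-free languages. -/
def IsTraceCFL {α : Type} (L : Set (List α)) : Prop :=
  ∃ J : α → α → Prop, (∀ a b, J a b → J b a) ∧ (∀ a, ¬ J a a) ∧
    ∃ L₀ : Language α, L₀.IsContextFree ∧ traceClosure J L₀ = L

/-- `listPow s m` is the word `s^m`. -/
def listPow {α : Type} (s : List α) (m : ℕ) : List α :=
  (List.replicate m s).flatten

/-- The shuffle-pumping condition. -/
def ShufflePumping {α : Type} (L : Set (List α)) : Prop :=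
  ∃ N : ℕ, ∀ w ∈ L, w.length > N →
    ∃ x y z s t : List α,
      (∃ yt u : List α, IsInterleaving y t yt ∧ IsInterleaving (s ++ yt) z u ∧ w = x ++ u) ∧
      1 ≤ s.length ∧ (s ++ y ++ t).length ≤ N ∧
      ∀ m : ℕ, x ++ listPow s m ++ y ++ listPow t m ++ z ∈ L

/-- The concatenation-pumping condition. -/
def ConcatPumping {α : Type} (L : Set (List α)) : Prop :=
  ∃ N : ℕ, ∀ w ∈ L, w.length > N →
    ∃ x y z s t : List α,
      w = x ++ y ++ z ∧
      1 ≤ (s ++ t).length ∧ (s ++ t).length ≤ N ∧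
      ∀ m : ℕ, x ++ listPow s m ++ y ++ listPow t m ++ z ∈ L


inductive Lt : Type
  | a | x | y | A
  deriving DecidableEq

open Lt

instance Lt.fin : Finite Lt :=
  Finite.of_injective (fun l : Lt => (match l with | a => 0 | x => 1 | y => 2 | A => 3 : Fin 4))
    (by intro p q; cases p <;> cases q <;> simp)

inductive Lg : List Lt → Prop
  | base : Lg [x]
  | wrap (v1 v2 : List Lt) : Lg (v1 ++ v2) → Lg (a :: v1 ++ y :: v2 ++ [A])

/-! ## shuffle CFL -/

theorem IsInterleaving.comm {α : Type} {w v u : List α} (h : IsInterleaving w v u) :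
    IsInterleaving v w u := by
  induction h with
  | nil => exact .nil
  | left _ ih => exact .right ih
  | right _ ih => exact .left ih

theorem IsInterleaving.assoc {α : Type} {u z t : List α} (h : IsInterleaving u z t) :
    ∀ {w v : List α}, IsInterleaving w v u → ∃ s, IsInterleaving v z s ∧ IsInterleaving w s t := by
  induction h with
  | nil => intro w v h'; cases h'; exact ⟨[], .nil, .nil⟩
  | left _ ih =>
    intro w v h'
    cases h' with
    | left h1 => obtain ⟨s, h2, h3⟩ := ih h1; exact ⟨s, h2, .left h3⟩
    | right h1 => obtain ⟨s, h2, h3⟩ := ih h1; exact ⟨_, .left h2, .right h3⟩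
  | right _ ih =>
    intro w v h'
    obtain ⟨s, h2, h3⟩ := ih h'
    exact ⟨_, .right h2, .right h3⟩

theorem IsInterleaving.nil_right {α : Type} (w : List α) : IsInterleaving w [] w := by
  induction w with
  | nil => exact .nil
  | cons _ _ ih => exact .left ih

theorem IsInterleaving.eq_of_nil {α : Type} {u w : List α} (h : IsInterleaving w [] u) :
    u = w := by
  generalize hv : ([] : List α) = v at h
  induction h with
  | nil => rfl
  | left _ ih => rw [ih hv]
  | right => simp at hv

theorem IsInterleaving.single {α : Type} {c : α} {u w : List α} (h : IsInterleaving w [c] u) :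
    ∃ v1 v2, w = v1 ++ v2 ∧ u = v1 ++ c :: v2 := by
  generalize hv : ([c] : List α) = v at h
  induction h with
  | nil => simp at hv
  | @left l _ _ _ _ ih =>
    obtain ⟨v1, v2, h1, h2⟩ := ih hv
    exact ⟨l :: v1, v2, by simp [h1], by simp [h2]⟩
  | right h1 =>
    simp only [List.cons.injEq] at hv
    obtain ⟨rfl, rfl⟩ := hv
    exact ⟨[], _, rfl, by simp [h1.eq_of_nil]⟩

theorem shuffleLang_comm {α : Type} (L K : Set (List α)) : shuffleLang L K = shuffleLang K L := by
  ext u; constructor <;> rintro ⟨w, hw, v, hv, h⟩ <;> exact ⟨v, hv, w, hw, h.comm⟩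

theorem shuffleLang_assoc_sub {α : Type} (L K M : Set (List α)) :
    shuffleLang (shuffleLang L K) M ⊆ shuffleLang L (shuffleLang K M) := by
  rintro t ⟨u, ⟨w, hw, v, hv, h⟩, z, hz, h'⟩
  obtain ⟨s, h1, h2⟩ := h'.assoc h
  exact ⟨w, hw, s, ⟨v, hv, z, hz, h1⟩, h2⟩

theorem shuffleLang_assoc {α : Type} (L K M : Set (List α)) :
    shuffleLang (shuffleLang L K) M = shuffleLang L (shuffleLang K M) := by
  apply Set.Subset.antisymm (shuffleLang_assoc_sub L K M)
  rw [shuffleLang_comm L, shuffleLang_comm K, shuffleLang_comm _ M, shuffleLang_comm L]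
  exact shuffleLang_assoc_sub _ _ _

inductive PV : Type
  | X | Y | Z

instance PV.fin : Finite PV :=
  Finite.of_injective (fun l : PV => (match l with | .X => 0 | .Y => 1 | .Z => 2 : Fin 3))
    (by intro p q; cases p <;> cases q <;> simp)

def sem : PATerm PV → Set (List Lt)
  | .eps => {[]}
  | .var .X => {w | Lg w}
  | .var .Y => {[y]}
  | .var .Z => {[A]}
  | .seq t u => Set.image2 (· ++ ·) (sem t) (sem u)
  | .par t u => shuffleLang (sem t) (sem u)

theorem sem_eq {t u : PATerm PV} (h : PAEq t u) : sem t = sem u := by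
  induction h with
  | refl => rfl
  | symm _ ih => exact ih.symm
  | trans _ _ ih1 ih2 => exact ih1.trans ih2
  | seq_assoc t u v => simp only [sem]; exact Set.image2_assoc (by simp)
  | par_assoc t u v => exact shuffleLang_assoc _ _ _
  | par_comm t u => exact shuffleLang_comm _ _
  | seq_eps_left t => simp [sem]
  | seq_eps_right t => simp [sem]
  | par_eps t =>
    ext w; constructor
    · rintro ⟨w', hw, v, hv, h⟩
      simp only [sem, Set.mem_singleton_iff] at hv
      subst hv; rw [h.eq_of_nil]; exact hw
    · intro hw; exact ⟨w, hw, [], rfl, .nil_right w⟩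
  | seq_congr _ _ ih1 ih2 => simp [sem, ih1, ih2]
  | par_congr _ _ ih1 ih2 => simp [sem, ih1, ih2]

def PP : Set (PV × Lt × PATerm PV) :=
  {(.X, a, .seq (.par (.var .X) (.var .Y)) (.var .Z)), (.X, x, .eps), (.Y, y, .eps), (.Z, A, .eps)}

theorem sem_step {t t' : PATerm PV} {l : Lt} (h : PAStep PP t l t') :
    ∀ w ∈ sem t', l :: w ∈ sem t := by
  induction h with
  | prod h =>
    intro w hw
    simp only [PP, Set.mem_insert_iff, Set.mem_singleton_iff, Prod.mk.injEq] at h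
    rcases h with ⟨rfl, rfl, rfl⟩ | ⟨rfl, rfl, rfl⟩ | ⟨rfl, rfl, rfl⟩ | ⟨rfl, rfl, rfl⟩
    · obtain ⟨u, ⟨v, hv, z, hz, hi⟩, z', hz', rfl⟩ := hw
      simp only [sem, Set.mem_singleton_iff] at hz hz'
      subst hz hz'
      obtain ⟨v1, v2, rfl, rfl⟩ := hi.single
      exact Lg.wrap v1 v2 hv
    all_goals
      simp only [sem, Set.mem_singleton_iff] at hw
      subst hw
      first | exact rfl | exact Lg.base
  | seq_left _ ih =>
    rintro w ⟨u, hu, v, hv, rfl⟩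
    exact ⟨_, ih u hu, v, hv, rfl⟩
  | par_left _ ih =>
    rintro w ⟨u, hu, v, hv, h⟩
    exact ⟨_, ih u hu, v, hv, .left h⟩
  | par_right _ ih =>
    rintro w ⟨u, hu, v, hv, h⟩
    exact ⟨u, hu, _, ih v hv, .right h⟩

theorem sem_gen {t : PATerm PV} {w : List Lt} (h : PAGen PP t w) : w ∈ sem t := by
  induction h with
  | done => exact rfl
  | eqv h _ ih => rw [sem_eq h]; exact ih
  | step h _ ih => exact sem_step h _ ih

theorem gen_seq {t u : PATerm PV} {w v : List Lt} (h : PAGen PP t w) (h' : PAGen PP u v) :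
    PAGen PP (t.seq u) (w ++ v) := by
  induction h with
  | done => exact .eqv (.seq_eps_left u) h'
  | eqv h _ ih => exact .eqv (.seq_congr h (.refl u)) ih
  | step h _ ih => exact .step (.seq_left h) ih

theorem gen_par {t : PATerm PV} {w : List Lt} (h : PAGen PP t w) : ∀ v1 v2, w = v1 ++ v2 →
    PAGen PP (t.par (.var .Y)) (v1 ++ y :: v2) := by
  have key : ∀ {t : PATerm PV} {w : List Lt}, PAGen PP t w →
      PAGen PP (t.par (.var .Y)) (y :: w) := by
    intro t w h
    refine .step (.par_right (.prod (t := .eps) (by simp [PP]))) (.eqv (.par_eps t) h)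
  induction h with
  | done =>
    intro v1 v2 e
    obtain ⟨rfl, rfl⟩ := List.append_eq_nil_iff.1 e.symm
    exact key .done
  | eqv h _ ih => intro v1 v2 e; exact .eqv (.par_congr h (.refl _)) (ih v1 v2 e)
  | step h h' ih =>
    intro v1 v2 e
    cases v1 with
    | nil => simp only [List.nil_append] at e ⊢; rw [← e]; exact key (.step h h')
    | cons c v1 =>
      simp only [List.cons_append, List.cons.injEq] at e
      obtain ⟨rfl, rfl⟩ := e
      exact .step (.par_left h) (ih v1 v2 rfl)

theorem gen_Lg {w : List Lt} (h : Lg w) : PAGen PP (.var .X) w := by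
  induction h with
  | base => exact .step (.prod (t := .eps) (by simp [PP])) .done
  | wrap v1 v2 _ ih =>
    refine .step (.prod (t := .seq (.par (.var .X) (.var .Y)) (.var .Z)) (by simp [PP])) ?_
    exact gen_seq (gen_par ih v1 v2 rfl) (.step (.prod (t := .eps) (by simp [PP])) .done)

theorem Lg_shuffle : IsShuffleCFL {w | Lg w} :=
  ⟨⟨PV, PV.fin, .X, PP, by simp [PP]⟩, by
    ext w; exact ⟨fun h => sem_gen h, fun h => gen_Lg h⟩⟩

/-! ## Invariants -/

theorem Lg.counts {w : List Lt} (h : Lg w) :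
    w.count a = w.count y ∧ w.count A = w.count y ∧ w.count x = 1 := by
  induction h with
  | base => decide
  | wrap v1 v2 _ ih =>
    simp only [List.count_append, List.count_cons, List.count_nil] at ih ⊢
    simp; omega

theorem split_cases {α : Type} {c d : α} {v1 v2 p q : List α} {e : α}
    (h : c :: v1 ++ e :: v2 ++ [d] = p ++ q) :
    p = [] ∨ (q = []) ∨ (∃ s t, p = c :: s ∧ v1 = s ++ t ∧ q = t ++ e :: v2 ++ [d]) ∨
      (∃ s t, p = c :: v1 ++ e :: s ∧ v2 = s ++ t ∧ q = t ++ [d]) := by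
  rcases p with _ | ⟨b, p⟩
  · simp
  rcases List.eq_nil_or_concat q with rfl | ⟨q, f, rfl⟩
  · simp
  right; right
  simp only [List.concat_eq_append, ← List.append_assoc] at h
  have h2 := List.append_inj' h rfl
  simp only [List.cons_append, List.cons.injEq, and_true] at h2
  obtain ⟨⟨rfl, h3⟩, rfl⟩ := h2
  rcases List.append_eq_append_iff.1 h3 with ⟨s, rfl, h4⟩ | ⟨s, rfl, h4⟩
  · rcases s with _ | ⟨g, s⟩
    · left; exact ⟨v1, [], by simp_all⟩
    · right
      simp only [List.cons_append, List.cons.injEq] at h4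
      obtain ⟨rfl, rfl⟩ := h4
      exact ⟨s, q, by simp_all⟩
  · left; exact ⟨p, s, by simp_all⟩

theorem Lg.prefix {w : List Lt} (h : Lg w) : ∀ p q, w = p ++ q →
    p.count A ≤ p.count y ∧ (p.count x = 0 → p.count A = 0) ∧ (p.count x ≠ 0 → q.count a = 0) := by
  induction h with
  | base =>
    intro p q e
    rcases p with _ | ⟨b, p⟩
    · simp
    · simp only [List.cons_append, List.cons.injEq] at e
      obtain ⟨rfl, e⟩ := e
      obtain ⟨rfl, rfl⟩ := List.append_eq_nil_iff.1 e.symm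
      simp
  | wrap v1 v2 hl ih =>
    intro p q e
    have hc := hl.counts
    simp only [List.count_append] at hc
    rcases split_cases e with rfl | rfl | ⟨s, t, rfl, rfl, rfl⟩ | ⟨s, t, rfl, rfl, rfl⟩
    · simp
    · simp only [List.append_nil] at e
      subst e
      simp; omega
    · have := ih s (t ++ v2) (by simp)
      simp at this ⊢; omega
    · have := ih (v1 ++ s) t (by simp)
      simp at this ⊢; omega

theorem Lg_word (n : ℕ) :
    Lg (List.replicate n a ++ List.replicate n y ++ x :: List.replicate n A) := by
  induction n with
  | zero => exact .base
  | succ n ih =>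
    have := Lg.wrap (List.replicate n a ++ List.replicate n y) (x :: List.replicate n A)
      (by simpa using ih)
    convert this using 1
    rw [List.replicate_succ, List.replicate_succ' (a := y), List.replicate_succ' (a := A)]
    simp

/-! ## Not a trace closure of a CFL -/

theorem len_counts (z : List Lt) :
    z.length = z.count a + z.count x + z.count y + z.count A := by
  induction z with
  | nil => rfl
  | cons c z ih => cases c <;> simp [ih] <;> omega

def rk : Lt → ℕ
  | a => 0
  | x => 1
  | y => 1
  | A => 2

def Sorted' (n : ℕ) (w : List Lt) : Prop :=
  w.Pairwise (fun c d => rk c ≤ rk d) ∧ w.count y = n ∧ w.count x = 1 ∧ w.count a = n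

theorem sorted_word (n : ℕ) :
    Sorted' n (List.replicate n a ++ List.replicate n y ++ x :: List.replicate n A) := by
  refine ⟨?_, ?_, ?_, ?_⟩
  · simp only [List.pairwise_append, List.pairwise_cons, List.pairwise_replicate,
      List.mem_append, List.mem_replicate, List.mem_cons]
    refine ⟨⟨.inr (le_refl _), .inr (le_refl _), ?_⟩, ⟨?_, .inr (le_refl _)⟩, ?_⟩
    · rintro _ ⟨_, rfl⟩ _ ⟨_, rfl⟩; simp [rk]
    · rintro _ ⟨_, rfl⟩; simp [rk]
    · rintro _ (⟨_, rfl⟩ | ⟨_, rfl⟩) _ (rfl | ⟨_, rfl⟩) <;> simp [rk]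
  all_goals simp [List.count_replicate]

theorem sorted_infix {n : ℕ} {p z q : List Lt} (h : Sorted' n (p ++ z ++ q)) (hz : z.length ≤ n) :
    z.count a = 0 ∨ z.count A = 0 := by
  by_contra! hc
  obtain ⟨h1, h2, h3, _⟩ := h
  have ha : a ∈ z := List.count_pos_iff.1 (Nat.pos_of_ne_zero hc.1)
  have hA : A ∈ z := List.count_pos_iff.1 (Nat.pos_of_ne_zero hc.2)
  rw [List.pairwise_append, List.pairwise_append] at h1
  obtain ⟨⟨_, _, h4⟩, _, h5⟩ := h1
  have hp : p.count y = 0 := List.count_eq_zero.2 fun hy => by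
    have := h4 y hy a ha
    simp [rk] at this
  have hq : q.count y = 0 := List.count_eq_zero.2 fun hy => by
    have := h5 A (by simp [hA]) y hy
    simp [rk] at this
  have := len_counts z
  simp only [List.count_append] at h2
  omega

theorem sorted_swap {J : Lt → Lt → Prop} (hs : ∀ c d, J c d → J d c) (hi : ∀ c, ¬ J c c)
    (h1 : ¬ J a y) (h2 : ¬ J a x) (h3 : ¬ J x A) (h4 : ¬ J y A) {n : ℕ} {v w : List Lt}
    (h : AdjSwap J v w) (hw : Sorted' n w) : Sorted' n v := by
  obtain ⟨p, q, hJ⟩ := h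
  rename_i c d
  obtain ⟨e1, e2, e3, e4⟩ := hw
  have key : rk c = rk d := by
    have e5 := (List.pairwise_append.1 e1)
    obtain ⟨_, e6, e7⟩ := e5
    have e8 := List.pairwise_cons.1 e6
    have e9 := List.pairwise_cons.1 e8.2
    have e10 : rk d ≤ rk c := e8.1 c (by simp)
    have e11 : ¬ (c = A ∧ d = a) := by
      rintro ⟨rfl, rfl⟩
      have : x ∉ p ++ a :: A :: q := by
        simp only [List.mem_append, List.mem_cons, not_or]
        refine ⟨fun hx => ?_, by simp, by simp, fun hx => ?_⟩
        · have := e7 x hx a (by simp)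
          simp [rk] at this
        · have := e9.1 x hx
          simp [rk] at this
      rw [List.count_eq_zero.2 this] at e3
      simp at e3
    have hJ' := hs _ _ hJ
    cases c <;> cases d <;> simp_all [rk]
  refine ⟨?_, ?_, ?_, ?_⟩
  · simp only [List.pairwise_append, List.pairwise_cons, List.mem_cons] at e1 ⊢
    grind
  all_goals simp only [List.count_append, List.count_cons] at *; omega

inductive CT (g : ContextFreeGrammar Lt) : List (Symbol Lt g.NT) → List Lt → Prop
  | nil : CT g [] []
  | term (t : Lt) {s w} : CT g s w → CT g (.terminal t :: s) (t :: w)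
  | nt {r} {s v w} : r ∈ g.rules → CT g r.output v → CT g s w →
      CT g (.nonterminal r.input :: s) (v ++ w)

theorem CT.append {g : ContextFreeGrammar Lt} {s t : List (Symbol Lt g.NT)} {v w : List Lt}
    (h : CT g s v) (h' : CT g t w) : CT g (s ++ t) (v ++ w) := by
  induction h with
  | nil => exact h'
  | term t _ ih => exact .term t ih
  | nt hr ho _ _ ih => rw [List.append_assoc]; exact .nt hr ho ih

theorem CT.split {g : ContextFreeGrammar Lt} {s t : List (Symbol Lt g.NT)} {w : List Lt}
    (h : CT g (s ++ t) w) : ∃ w1 w2, w = w1 ++ w2 ∧ CT g s w1 ∧ CT g t w2 := by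
  induction s generalizing w with
  | nil => exact ⟨[], w, rfl, .nil, h⟩
  | cons c s ih =>
    rw [List.cons_append] at h
    cases h with
    | term t h =>
      obtain ⟨w1, w2, rfl, h1, h2⟩ := ih h
      exact ⟨_, w2, rfl, .term t h1, h2⟩
    | nt hr ho h =>
      obtain ⟨w1, w2, rfl, h1, h2⟩ := ih h
      exact ⟨_, w2, (List.append_assoc _ _ _).symm, .nt hr ho h1, h2⟩

theorem CT.terminals {g : ContextFreeGrammar Lt} (w : List Lt) :
    CT g (w.map Symbol.terminal) w := by
  induction w with
  | nil => exact .nil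
  | cons c w ih => exact .term c ih

theorem CT.of_derives {g : ContextFreeGrammar Lt} {s : List (Symbol Lt g.NT)} {w : List Lt}
    (h : g.Derives s (w.map Symbol.terminal)) : CT g s w := by
  induction h using Relation.ReflTransGen.head_induction_on with
  | refl => exact .terminals w
  | head h _ ih =>
    obtain ⟨r, hr, h⟩ := h
    obtain ⟨p, q, rfl, rfl⟩ := ContextFreeRule.rewrites_iff.1 h
    obtain ⟨w1, w2, rfl, h1, h2⟩ := ih.split
    obtain ⟨w3, w4, rfl, h3, h4⟩ := h1.split
    refine .append (.append h3 ?_) h2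
    have := CT.nt hr h4 .nil
    simpa using this

theorem CT.derives {g : ContextFreeGrammar Lt} {s : List (Symbol Lt g.NT)} {w : List Lt}
    (h : CT g s w) : g.Derives s (w.map Symbol.terminal) := by
  induction h with
  | nil => exact .refl _
  | term t _ ih => exact ih.append_left [Symbol.terminal t]
  | @nt r s v w hr _ _ ih1 ih2 =>
    rw [List.map_append]
    have h1 : g.Derives [.nonterminal r.input] r.output :=
      Relation.ReflTransGen.single ⟨r, hr, by
        rw [ContextFreeRule.rewrites_iff]; exact ⟨[], [], by simp, by simp⟩⟩
    have h2 : g.Derives (.nonterminal r.input :: s) (r.output ++ s) := h1.append_right s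
    exact (h2.trans (ih1.append_right s)).trans (ih2.append_left _)

theorem CT.bound {g : ContextFreeGrammar Lt} {K m n : ℕ}
    (hK : ∀ r ∈ g.rules, ∀ v, CT g r.output v → ∃ v', CT g [.nonterminal r.input] v' ∧ v'.length ≤ K)
    (hm : ∀ r ∈ g.rules, r.output.length ≤ m) (hn : (3 * K + 1) * m ≤ n)
    {s : List (Symbol Lt g.NT)} {v : List Lt} (h : CT g s v) :
    ∀ p q, Sorted' n (p ++ v ++ q) → (∀ v', CT g s v' → Lg (p ++ v' ++ q)) →
      v.length ≤ (3 * K + 1) * s.length := by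
  induction h with
  | nil => intros; simp
  | @term t s w h ih =>
    intro p q h1 h2
    have := ih (p ++ [t]) q (by simpa using h1) (fun v' hv' => by simpa using h2 _ (.term t hv'))
    simp only [List.length_cons]
    nlinarith
  | @nt r s v w hr ho hs ih1 ih2 =>
    intro p q h1 h2
    have hsv := ih2 (p ++ v) q (by simpa using h1)
      (fun v' hv' => by simpa using h2 _ (.nt hr ho hv'))
    have hv := ih1 p (w ++ q) (by simpa using h1)
      (fun v' hv' => by simpa using h2 _ (.nt hr hv' hs))
    have hvn : v.length ≤ n := hv.trans ((Nat.mul_le_mul_left _ (hm r hr)).trans hn)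
    obtain ⟨v', hv', hl⟩ := hK r hr v ho
    have e1 := (h2 _ (.nt hr ho hs)).counts
    have e2 := (h2 _ (hv'.append hs)).counts
    have e3 := sorted_infix (p := p) (z := v) (q := w ++ q) (by simpa using h1) hvn
    have l1 := len_counts v
    have l2 := len_counts v'
    simp only [List.count_append] at e1 e2
    have hv3 : v.length ≤ 3 * K + 1 := by omega
    simp only [List.length_cons, List.length_append]
    nlinarith

theorem Lg_not_trace : ¬ IsTraceCFL {w | Lg w} := by
  rintro ⟨J, hs, hi, L₀, ⟨g, rfl⟩, hJ⟩
  have hcl : ∀ v w, Lg v → AdjSwap J v w → Lg w := by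
    intro v w hv hvw
    have : v ∈ traceClosure J g.language := by rw [hJ]; exact hv
    obtain ⟨u, hu, huv⟩ := this
    have : w ∈ traceClosure J g.language := ⟨u, hu, huv.tail hvw⟩
    rw [hJ] at this; exact this
  have hsub : ∀ v, v ∈ g.language → Lg v := by
    intro v hv
    have : v ∈ traceClosure J g.language := ⟨v, hv, .refl⟩
    rw [hJ] at this; exact this
  have w1 : Lg [a, y, x, A] := Lg.wrap [] [x] .base
  have w2 : Lg [a, x, y, A] := Lg.wrap [x] [] .base
  have h1 : ¬ J a y := fun h => by
    have := (hcl _ _ w1 (.swap [] [x, A] h)).prefix [y] [a, x, A] rfl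
    have h' := (hcl _ _ w1 (.swap [] [x, A] h))
    generalize hw : [] ++ y :: a :: [x, A] = w at h'
    cases h' <;> simp at hw
  have h2 : ¬ J a x := fun h => by
    have := (hcl _ _ w2 (.swap [] [y, A] h)).prefix [x] [a, y, A] rfl
    simp at this
  have h3 : ¬ J x A := fun h => by
    have := (hcl _ _ w1 (.swap [a, y] [] h)).prefix [a, y, A] [x] rfl
    simp at this
  have h4 : ¬ J y A := fun h => by
    have := (hcl _ _ w2 (.swap [a, x] [] h)).prefix [a, x, A] [y] rfl
    simp at this
  classical
  let f : ContextFreeRule Lt g.NT → ℕ := fun r =>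
    if h : ∃ v, CT g [.nonterminal r.input] v then h.choose.length else 0
  let K := g.rules.sup f
  let m := g.rules.sup fun r => r.output.length
  have hK : ∀ r ∈ g.rules, ∀ v, CT g r.output v →
      ∃ v', CT g [.nonterminal r.input] v' ∧ v'.length ≤ K := by
    intro r hr v hv
    have hex : ∃ v, CT g [.nonterminal r.input] v := ⟨v ++ [], .nt hr hv .nil⟩
    refine ⟨hex.choose, hex.choose_spec, ?_⟩
    have : f r ≤ K := Finset.le_sup hr
    simpa only [f, dif_pos hex] using this
  have hm : ∀ r ∈ g.rules, r.output.length ≤ m := fun r hr =>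
    Finset.le_sup (f := fun r : ContextFreeRule Lt g.NT => r.output.length) hr
  let n := (3 * K + 1) * m + (3 * K + 1)
  have hw : List.replicate n a ++ List.replicate n y ++ x :: List.replicate n A ∈
      traceClosure J g.language := by rw [hJ]; exact Lg_word n
  obtain ⟨v, hv, hvw⟩ := hw
  have hsort : Sorted' n v := by
    clear hv
    induction hvw using Relation.ReflTransGen.head_induction_on with
    | refl => exact sorted_word n
    | head h' hh ih => exact sorted_swap hs hi h1 h2 h3 h4 h' ih
  have hct : CT g [.nonterminal g.initial] v := .of_derives ((g.mem_language_iff v).1 hv)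
  have := hct.bound hK hm (n := n) (by omega) [] [] (by simpa using hsort) (fun v' hv' => by
    simpa using hsub v' ((g.mem_language_iff v').2 hv'.derives))
  have l := len_counts v
  obtain ⟨_, l1, l2, l3⟩ := hsort
  simp at this
  omega

/-! ## Not a PCCFL -/

section PC

variable {G : PCGrammar Lt}

theorem pd_append {γ δ : List G.V} {v w : List Lt} (h : PCDerives G γ v) (h' : PCDerives G δ w) :
    PCDerives G (γ ++ δ) (v ++ w) := by
  induction h with
  | nil => exact h'
  | prod hp _ ih =>
    rw [List.append_assoc] at ih
    exact .prod hp ih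
  | swap hi _ ih =>
    simp only [List.append_assoc, List.cons_append] at ih ⊢
    exact .swap hi ih

theorem pd_move {X : G.V} {ζ : List G.V} {w : List Lt} (η : List G.V) :
    ∀ (π : List G.V), (∀ Z ∈ η, G.indep Z X) →
    (PCDerives G (π ++ X :: (η ++ ζ)) w ↔ PCDerives G (π ++ (η ++ X :: ζ)) w) := by
  induction η with
  | nil => intro π _; exact Iff.rfl
  | cons Z η ih =>
    intro π h
    have h1 := ih (π ++ [Z]) (fun Y hY => h Y (by simp [hY]))
    have h2 : G.indep Z X := h Z (by simp)
    simp only [List.append_assoc, List.cons_append, List.nil_append] at h1 ⊢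
    rw [← h1]
    exact ⟨fun h => .swap h2 h, fun h => .swap (G.indep_symm h2) h⟩

theorem pd_first {γ : List G.V} {u : List Lt} (h : PCDerives G γ u) : ∀ l w, u = l :: w →
    ∃ η X ζ rhs, γ = η ++ X :: ζ ∧ (∀ Z ∈ η, G.indep Z X) ∧ (X, l, rhs) ∈ G.prods ∧
      PCDerives G (rhs ++ (η ++ ζ)) w := by
  induction h with
  | nil => intro l w e; simp at e
  | @prod X c rhs β w' hp h _ =>
    intro l w e
    obtain ⟨rfl, rfl⟩ := List.cons.inj e
    exact ⟨[], X, β, rhs, rfl, by simp, hp, h⟩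
  | @swap η0 β X0 Y0 w' hi h ih =>
    intro l w e
    obtain ⟨η, X, ζ, rhs, h1, h2, h3, h4⟩ := ih l w e
    rcases List.append_eq_append_iff.1 h1 with ⟨μ, rfl, h5⟩ | ⟨μ, rfl, h5⟩
    · rcases μ with _ | ⟨b, μ⟩
      · simp only [List.nil_append, List.cons.injEq] at h5
        obtain ⟨rfl, rfl⟩ := h5
        refine ⟨η0 ++ [X0], Y0, β, rhs, by simp, ?_, h3, ?_⟩
        · intro Z hZ
          rcases List.mem_append.1 hZ with hZ | hZ
          · exact h2 Z (by simp [hZ])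
          · rw [List.mem_singleton.1 hZ]; exact hi
        · simpa using h4
      · simp only [List.cons_append, List.cons.injEq] at h5
        obtain ⟨rfl, h5⟩ := h5
        rcases μ with _ | ⟨b, μ⟩
        · simp only [List.nil_append, List.cons.injEq] at h5
          obtain ⟨rfl, rfl⟩ := h5
          refine ⟨η0, X0, Y0 :: β, rhs, rfl, fun Z hZ => h2 Z (by simp [hZ]), h3, ?_⟩
          simpa using h4
        · simp only [List.cons_append, List.cons.injEq] at h5
          obtain ⟨rfl, rfl⟩ := h5
          refine ⟨η0 ++ X0 :: Y0 :: μ, X, ζ, rhs, by simp, ?_, h3, ?_⟩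
          · intro Z hZ
            apply h2 Z
            simp at hZ ⊢
            tauto
          · have := PCDerives.swap (η := rhs ++ η0) (β := μ ++ ζ) hi (by simpa using h4)
            simpa using this
    · rcases μ with _ | ⟨b, μ⟩
      · simp only [List.nil_append, List.cons.injEq] at h5
        obtain ⟨rfl, rfl⟩ := h5
        refine ⟨η ++ [X0], X, β, rhs, by simp, ?_, h3, ?_⟩
        · intro Z hZ
          rcases List.mem_append.1 hZ with hZ | hZ
          · exact h2 Z hZ
          · rw [List.mem_singleton.1 hZ]; exact hi
        · simpa using h4
      · simp only [List.cons_append, List.cons.injEq] at h5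
        obtain ⟨rfl, rfl⟩ := h5
        refine ⟨η, X, μ ++ X0 :: Y0 :: β, rhs, by simp, h2, h3, ?_⟩
        have := PCDerives.swap (η := rhs ++ (η ++ μ)) (β := β) hi (by simpa using h4)
        simpa using this

theorem pd_fire {η ζ rhs : List G.V} {X : G.V} {l : Lt} {w : List Lt}
    (h1 : ∀ Z ∈ η, G.indep Z X) (h2 : (X, l, rhs) ∈ G.prods)
    (h3 : PCDerives G (rhs ++ (η ++ ζ)) w) : PCDerives G (η ++ X :: ζ) (l :: w) :=
  (pd_move η [] h1).1 (.prod h2 h3)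

/-- annotated nonterminals -/
structure El (V : Type) where
  l : V
  w : List Lt
  b : Bool

def lab {V : Type} (Γ : List (El V)) : List V := Γ.map El.l

def wd {V : Type} (Γ : List (El V)) : List Lt := Γ.flatMap El.w

@[simp] theorem lab_append {V : Type} (Γ Δ : List (El V)) : lab (Γ ++ Δ) = lab Γ ++ lab Δ := by
  simp [lab]
@[simp] theorem lab_cons {V : Type} (c : El V) (Δ : List (El V)) : lab (c :: Δ) = c.l :: lab Δ := by
  simp [lab]
@[simp] theorem lab_nil {V : Type} : lab ([] : List (El V)) = [] := rfl
@[simp] theorem wd_append {V : Type} (Γ Δ : List (El V)) : wd (Γ ++ Δ) = wd Γ ++ wd Δ := by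
  simp [wd]
@[simp] theorem wd_cons {V : Type} (c : El V) (Δ : List (El V)) : wd (c :: Δ) = c.w ++ wd Δ := by
  simp [wd]
@[simp] theorem wd_nil {V : Type} : wd ([] : List (El V)) = [] := rfl

theorem lab_split {V : Type} {Γ : List (El V)} {η ζ : List V} (h : lab Γ = η ++ ζ) :
    ∃ Γ1 Γ2, Γ = Γ1 ++ Γ2 ∧ lab Γ1 = η ∧ lab Γ2 = ζ := List.map_eq_append_iff.1 h

theorem lab_split_cons {V : Type} {Γ : List (El V)} {X : V} {ζ : List V} (h : lab Γ = X :: ζ) :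
    ∃ c Γ2, Γ = c :: Γ2 ∧ c.l = X ∧ lab Γ2 = ζ := List.map_eq_cons_iff.1 h

def Val (Γ : List (El G.V)) : Prop := ∀ c ∈ Γ, PCDerives G [c.l] c.w

theorem Val.pd {Γ : List (El G.V)} (h : Val Γ) : PCDerives G (lab Γ) (wd Γ) := by
  induction Γ with
  | nil => exact .nil
  | cons c Γ ih =>
    simp only [lab_cons, wd_cons]
    exact pd_append (h c (by simp)) (ih fun d hd => h d (by simp [hd]))

theorem pd_prod_single {X : G.V} {l : Lt} {rhs : List G.V} {w : List Lt}
    (h : (X, l, rhs) ∈ G.prods) (h' : PCDerives G rhs w) : PCDerives G [X] (l :: w) :=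
  .prod h (by simpa using h')

theorem pd_decomp {γ : List G.V} {w : List Lt} (h : PCDerives G γ w) :
    ∃ Γ : List (El G.V), lab Γ = γ ∧ Val Γ ∧ (wd Γ).Perm w ∧ ∀ c ∈ Γ, c.b = false := by
  induction h with
  | nil => exact ⟨[], rfl, by simp [Val], by simp, by simp⟩
  | @prod X l rhs β w hp _ ih =>
    obtain ⟨Γ, h1, h2, h3, h4⟩ := ih
    obtain ⟨Γ1, Γ2, rfl, rfl, rfl⟩ := lab_split h1
    refine ⟨⟨X, l :: wd Γ1, false⟩ :: Γ2, by simp, ?_, ?_, ?_⟩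
    · intro c hc
      rcases List.mem_cons.1 hc with rfl | hc
      · exact pd_prod_single hp (Val.pd fun d hd => h2 d (by simp [hd]))
      · exact h2 c (by simp [hc])
    · simpa using h3
    · intro c hc
      rcases List.mem_cons.1 hc with rfl | hc
      · rfl
      · exact h4 c (by simp [hc])
  | swap hi _ ih =>
    obtain ⟨Γ, h1, h2, h3, h4⟩ := ih
    obtain ⟨Γ1, Γ2, rfl, rfl, h5⟩ := lab_split h1
    obtain ⟨c, Γ2, rfl, rfl, h6⟩ := lab_split_cons h5
    obtain ⟨d, Γ2, rfl, rfl, rfl⟩ := lab_split_cons h6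
    refine ⟨Γ1 ++ d :: c :: Γ2, by simp, ?_, ?_, ?_⟩
    · intro f hf; apply h2 f; simp at hf ⊢; tauto
    · refine List.Perm.trans ?_ h3
      simp only [wd_append, wd_cons, ← List.append_assoc]
      refine List.Perm.append_right _ ?_
      simp only [List.append_assoc]
      exact List.Perm.append_left _ List.perm_append_comm
    · intro f hf; apply h4 f; simp at hf ⊢; tauto

def Ctx (p : List Lt) (γ : List G.V) : Prop := ∀ v, PCDerives G γ v → Lg (p ++ v)

theorem Ctx.fire {p : List Lt} {η ζ rhs : List G.V} {X : G.V} {l : Lt}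
    (h : Ctx p (η ++ X :: ζ)) (h1 : ∀ Z ∈ η, G.indep Z X) (h2 : (X, l, rhs) ∈ G.prods) :
    Ctx (p ++ [l]) (rhs ++ (η ++ ζ)) := fun v hv => by
  simpa using h _ (pd_fire h1 h2 hv)

open Classical in
noncomputable def cw (Z : G.V) : List Lt :=
  if h : ∃ v, PCDerives G [Z] v then h.choose else []

def Der (γ : List G.V) : Prop := ∀ Z ∈ γ, ∃ v, PCDerives G [Z] v

noncomputable def cws (γ : List G.V) : List Lt := γ.flatMap cw

@[simp] theorem cws_append (γ δ : List G.V) : cws (γ ++ δ) = cws γ ++ cws δ := by simp [cws]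
@[simp] theorem cws_cons (Z : G.V) (δ : List G.V) : cws (Z :: δ) = cw Z ++ cws δ := by simp [cws]
@[simp] theorem cws_nil : cws ([] : List G.V) = [] := rfl

theorem Der.cw {γ : List G.V} (h : Der γ) {Z : G.V} (hZ : Z ∈ γ) : PCDerives G [Z] (cw Z) := by
  have := h Z hZ
  rw [_root_.cw, dif_pos this]; exact this.choose_spec

theorem Der.sub {γ δ : List G.V} (h : Der γ) (h' : ∀ Z ∈ δ, Z ∈ γ) : Der δ :=
  fun Z hZ => h Z (h' Z hZ)

theorem Der.cws {γ : List G.V} (h : Der γ) : PCDerives G γ (cws γ) := by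
  induction γ with
  | nil => exact .nil
  | cons Z γ ih =>
    rw [cws_cons]
    exact pd_append (h.cw (by simp)) (ih (h.sub (by simp +contextual)))

theorem pd_der {γ : List G.V} {w : List Lt} (h : PCDerives G γ w) : Der γ := by
  obtain ⟨Γ, rfl, h2, _⟩ := pd_decomp h
  intro Z hZ
  obtain ⟨c, hc, rfl⟩ := List.mem_map.1 hZ
  exact ⟨_, h2 c hc⟩

noncomputable def ee (γ : List G.V) : ℤ := ((cws γ).count y : ℤ) - (cws γ).count A

@[simp] theorem ee_append (γ δ : List G.V) : ee (γ ++ δ) = ee γ + ee δ := by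
  simp [ee]; ring
theorem ee_cons (Z : G.V) (δ : List G.V) : ee (Z :: δ) = ee [Z] + ee δ := by
  rw [← List.singleton_append, ee_append]
@[simp] theorem ee_nil : ee ([] : List G.V) = 0 := rfl

theorem ee_bound {E : ℕ} (hE : ∀ Z : G.V, (cw Z).length ≤ E) (γ : List G.V) :
    |ee γ| ≤ E * γ.length := by
  induction γ with
  | nil => simp
  | cons Z γ ih =>
    rw [ee_cons]
    have h1 : |ee [Z]| ≤ E := by
      have := hE Z
      have := len_counts (cw Z)
      rw [abs_le]; simp only [ee, cws_cons, cws_nil, List.append_nil]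
      constructor <;> omega
    have := abs_add_le (ee [Z]) (ee γ)
    simp only [List.length_cons]
    push_cast
    nlinarith

/-- all words of a nonterminal in context have the same balances -/
theorem val_word {p : List Lt} {η ζ : List G.V} {X : G.V} (hc : Ctx p (η ++ X :: ζ))
    (hd : Der (η ++ X :: ζ)) {v : List Lt} (hv : PCDerives G [X] v) :
    (v.count y : ℤ) - v.count A = ee [X] ∧
    (v.count A : ℤ) - v.count a = (cw X).count A - (cw X).count a ∧
    v.count x = (cw X).count x := by
  have d1 : Der η := hd.sub (by simp +contextual)
  have d2 : Der ζ := hd.sub (by simp +contextual)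
  have h1 := (hc _ hd.cws).counts
  have h2 := (hc _ (pd_append d1.cws (pd_append hv d2.cws))).counts
  simp only [cws_append, cws_cons, List.count_append, ee, cws_nil, List.append_nil] at h1 h2 ⊢
  omega

theorem left_noA {p : List Lt} {η τ : List G.V} {χ : G.V} (hc : Ctx p (η ++ χ :: τ))
    {v1 v2 v3 : List Lt} (h1 : PCDerives G η v1) (h2 : PCDerives G [χ] v2)
    (h3 : PCDerives G τ v3) (hx : v2.count x ≠ 0) :
    v1.count A = 0 ∧ v1.count x = 0 ∧ v3.count a = 0 ∧ v3.count x = 0 := by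
  have h4 := hc _ (pd_append h1 (pd_append h2 h3))
  have h5 := h4.prefix (p ++ v1) (v2 ++ v3) (by simp)
  have h6 := h4.prefix (p ++ v1 ++ v2) v3 (by simp)
  have h7 := h4.counts
  simp only [List.count_append] at h5 h6 h7
  omega

def PInv (κ : ℤ) (γ : List G.V) : Prop :=
  ∃ η χ τ, γ = η ++ χ :: τ ∧ (cw χ).count x ≠ 0 ∧
    ∀ P Q, τ = P ++ Q → ee η + ee [χ] + ee P ≤ κ

theorem cws_mem {γ : List G.V} (h : (cws γ).count x ≠ 0) : ∃ Z ∈ γ, (cw Z).count x ≠ 0 := by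
  have := List.count_pos_iff.1 (Nat.pos_of_ne_zero h)
  obtain ⟨Z, hZ, h'⟩ := List.mem_flatMap.1 this
  exact ⟨Z, hZ, by have := List.count_pos_iff.2 h'; omega⟩

theorem aphase_step {E R : ℕ} (hE : ∀ Z : G.V, (cw Z).length ≤ E)
    (hR : ∀ q ∈ G.prods, q.2.2.length ≤ R) {p : List Lt} {γ : List G.V} {w : List Lt}
    (hc : Ctx p γ) (hi : PInv (E + R * E) γ) (hw : PCDerives G γ (a :: w)) :
    ∃ γ', Ctx (p ++ [a]) γ' ∧ PInv (E + R * E) γ' ∧ PCDerives G γ' w := by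
  obtain ⟨η0, X, ζ0, rhs, rfl, h2, h3, h4⟩ := pd_first hw a w rfl
  have hder := pd_der hw
  have hder' := pd_der h4
  have hrhs : Der rhs := hder'.sub (by simp +contextual)
  have hXw := pd_prod_single h3 hrhs.cws
  have hval := val_word hc hder hXw
  have hee : ee rhs = ee [X] := by
    rw [← hval.1]; simp [ee]
  have hxx : (cws rhs).count x = (cw X).count x := by
    rw [← hval.2.2]; simp
  refine ⟨_, hc.fire h2 h3, ?_, h4⟩
  obtain ⟨η, χ, τ, e, hχ, hb⟩ := hi
  have hder2 := hder
  have hc2 := hc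
  rw [e] at hder2 hc2
  have dη : Der η := hder2.sub (by simp +contextual)
  have dτ : Der τ := hder2.sub (by simp +contextual)
  have dχ := hder2.cw (Z := χ) (by simp)
  have hfree := left_noA hc2 dη.cws dχ dτ.cws hχ
  rcases List.append_eq_append_iff.1 e with ⟨μ, rfl, h5⟩ | ⟨μ, rfl, h5⟩
  · rcases μ with _ | ⟨b, μ⟩
    · simp only [List.nil_append, List.cons.injEq] at h5
      obtain ⟨rfl, rfl⟩ := h5
      obtain ⟨χ', hχ', hx'⟩ := cws_mem (γ := rhs) (by rw [hxx]; exact hχ)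
      obtain ⟨η1, ζ1, rfl⟩ := List.append_of_mem hχ'
      refine ⟨η1, χ', ζ1 ++ (η0 ++ [] ++ ζ0), by simp, hx', ?_⟩
      simp only [List.append_nil] at *
      intro P Q hPQ
      have hX1 : |ee [X]| ≤ E := by simpa using ee_bound hE [X]
      rw [ee_append, ee_cons] at hee
      rcases List.append_eq_append_iff.1 hPQ with ⟨P', rfl, h6⟩ | ⟨Q1, rfl, h6⟩
      · rw [ee_append]
        rcases List.append_eq_append_iff.1 h6 with ⟨P'', rfl, h7⟩ | ⟨η', rfl, h7⟩
        · have := hb P'' Q h7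
          rw [ee_append]; linarith
        · have h8 := hb [] ζ0 rfl
          have : 0 ≤ ee η' := by
            have h9 := hfree.1
            rw [cws_append, List.count_append] at h9
            simp only [ee]; omega
          rw [ee_append] at h8
          simp at h8
          linarith
      · have h8 := ee_bound hE Q1
        have h9 := hR _ h3
        simp only [List.length_append, List.length_cons] at h9
        rw [ee_append] at hee
        have h10 : (E : ℤ) * Q1.length ≤ R * E := by
          have : Q1.length ≤ R := by omega
          have : (Q1.length : ℤ) ≤ R := by exact_mod_cast this
          nlinarith
        rw [abs_le] at h8 hX1
        linarith
    · simp only [List.cons_append, List.cons.injEq] at h5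
      obtain ⟨rfl, rfl⟩ := h5
      refine ⟨rhs ++ (η0 ++ μ), χ, τ, by simp, hχ, ?_⟩
      intro P Q hPQ
      have := hb P Q hPQ
      rw [ee_append, ee_cons X] at this
      rw [ee_append, ee_append, hee]
      linarith
  · rcases μ with _ | ⟨b, μ⟩
    · simp only [List.nil_append, List.cons.injEq] at h5
      obtain ⟨rfl, rfl⟩ := h5
      obtain ⟨χ', hχ', hx'⟩ := cws_mem (γ := rhs) (by rw [hxx]; exact hχ)
      obtain ⟨η1, ζ1, rfl⟩ := List.append_of_mem hχ'
      refine ⟨η1, χ', ζ1 ++ (η ++ [] ++ τ), by simp, hx', ?_⟩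
      simp only [List.append_nil] at *
      intro P Q hPQ
      have hX1 : |ee [χ]| ≤ E := by simpa using ee_bound hE [χ]
      rw [ee_append, ee_cons] at hee
      rcases List.append_eq_append_iff.1 hPQ with ⟨P', rfl, h6⟩ | ⟨Q1, rfl, h6⟩
      · rw [ee_append]
        rcases List.append_eq_append_iff.1 h6 with ⟨P'', rfl, h7⟩ | ⟨η', rfl, h7⟩
        · have := hb P'' Q h7
          rw [ee_append]; linarith
        · have h8 := hb [] τ rfl
          have : 0 ≤ ee η' := by
            have h9 := hfree.1
            rw [cws_append, List.count_append] at h9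
            simp only [ee]; omega
          rw [ee_append] at h8
          simp at h8
          linarith
      · have h8 := ee_bound hE Q1
        have h9 := hR _ h3
        simp only [List.length_append, List.length_cons] at h9
        rw [ee_append] at hee
        have h10 : (E : ℤ) * Q1.length ≤ R * E := by
          have : Q1.length ≤ R := by omega
          have : (Q1.length : ℤ) ≤ R := by exact_mod_cast this
          nlinarith
        rw [abs_le] at h8 hX1
        linarith
    · simp only [List.cons_append, List.cons.injEq] at h5
      obtain ⟨rfl, rfl⟩ := h5
      exfalso
      have d1 : Der μ := dτ.sub (by simp +contextual)
      have d2 : Der ζ0 := dτ.sub (by simp +contextual)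
      have := left_noA hc2 dη.cws dχ (pd_append d1.cws (pd_append hXw d2.cws)) hχ
      simp at this

theorem aphase {E R : ℕ} (hE : ∀ Z : G.V, (cw Z).length ≤ E)
    (hR : ∀ q ∈ G.prods, q.2.2.length ≤ R) {w : List Lt} (k : ℕ) :
    ∀ (p : List Lt) (γ : List G.V), Ctx p γ → PInv (E + R * E) γ →
    PCDerives G γ (List.replicate k a ++ w) →
    ∃ γ', Ctx (p ++ List.replicate k a) γ' ∧ PInv (E + R * E) γ' ∧ PCDerives G γ' w := by
  induction k with
  | zero => intro p γ h1 h2 h3; exact ⟨γ, by simpa using h1, h2, by simpa using h3⟩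
  | succ k ih =>
    intro p γ h1 h2 h3
    rw [List.replicate_succ, List.cons_append] at h3
    obtain ⟨γ', h4, h5, h6⟩ := aphase_step hE hR h1 h2 h3
    obtain ⟨γ'', h7, h8, h9⟩ := ih _ γ' h4 h5 h6
    exact ⟨γ'', by simpa [List.replicate_succ] using h7, h8, h9⟩

theorem yphase {n : ℕ} (i : ℕ) : ∀ (p : List Lt) (γ : List G.V), p.count x = 0 → Ctx p γ →
    PCDerives G γ (List.replicate i y ++ x :: List.replicate n A) →
    ∃ Γ : List (El G.V), lab Γ = γ ∧ Val Γ ∧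
      (wd Γ).Perm (List.replicate i y ++ x :: List.replicate n A) ∧
      Γ.Pairwise (fun c d => c.b = false → d.b = true → G.indep c.l d.l) ∧
      (∀ c ∈ Γ, c.b = true → (c.w.count x ≠ 0 ∨ c.w.count A = 0)) ∧
      (∀ c ∈ Γ, c.b = false → c.w.count y = 0) := by
  induction i with
  | zero =>
    intro p γ _ _ h
    obtain ⟨Γ, h1, h2, h3, h4⟩ := pd_decomp h
    refine ⟨Γ, h1, h2, h3, ?_, ?_, ?_⟩
    · refine List.Pairwise.imp_of_mem (R := fun _ _ => True) ?_ (List.pairwise_of_forall (fun _ _ => trivial))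
      intro c d _ hd _ _ hb
      rw [h4 d hd] at hb; simp at hb
    · intro c hc hb; rw [h4 c hc] at hb; simp at hb
    · intro c hc _
      rw [List.count_eq_zero]
      intro hy
      have : y ∈ wd Γ := List.mem_flatMap.2 ⟨c, hc, hy⟩
      have := h3.mem_iff.1 this
      simp at this
  | succ i ih =>
    intro p γ hp hc h
    rw [List.replicate_succ, List.cons_append] at h
    obtain ⟨η, X, ζ, rhs, rfl, h2, h3, h4⟩ := pd_first h y _ rfl
    obtain ⟨Γ, h1, hv, hperm, hpw, ht, hf⟩ := ih _ _ (by simp [hp]) (hc.fire h2 h3) h4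
    obtain ⟨Γr, Γ2, rfl, rfl, h5⟩ := lab_split h1
    obtain ⟨Γη, Γζ, rfl, rfl, rfl⟩ := lab_split h5
    have vr : Val Γr := fun c hc => hv c (by simp [hc])
    have vη : Val Γη := fun c hc => hv c (by simp [hc])
    have vζ : Val Γζ := fun c hc => hv c (by simp [hc])
    have hX := pd_prod_single h3 vr.pd
    refine ⟨Γη ++ ⟨X, y :: wd Γr, true⟩ :: Γζ, by simp, ?_, ?_, ?_, ?_, ?_⟩
    · intro c hc
      rcases List.mem_append.1 hc with hc | hc
      · exact vη c hc
      rcases List.mem_cons.1 hc with rfl | hc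
      · exact hX
      · exact vζ c hc
    · rw [List.replicate_succ, List.cons_append]
      simp only [wd_append, wd_cons, List.cons_append]
      refine List.perm_middle.trans (List.Perm.cons _ ?_)
      refine List.Perm.trans ?_ hperm
      simp only [wd_append, ← List.append_assoc]
      exact List.Perm.append_right _ List.perm_append_comm
    · rw [List.pairwise_append] at hpw
      obtain ⟨_, hpw, _⟩ := hpw
      rw [List.pairwise_append] at hpw ⊢
      obtain ⟨q1, q2, q3⟩ := hpw
      refine ⟨q1, List.pairwise_cons.2 ⟨by simp, q2⟩, ?_⟩
      intro c hc d hd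
      rcases List.mem_cons.1 hd with rfl | hd
      · intro _ _
        exact h2 _ (List.mem_map_of_mem hc)
      · exact q3 c hc d hd
    · intro c hcm
      rcases List.mem_append.1 hcm with hcm | hcm
      · exact ht c (by simp [hcm])
      rcases List.mem_cons.1 hcm with rfl | hcm
      · intro _
        by_contra! hcon
        simp only at hcon
        have hd : PCDerives G (lab Γη ++ X :: lab Γζ) ((y :: wd Γr) ++ (wd Γη ++ wd Γζ)) :=
          (pd_move _ [] h2).1 (pd_append (γ := [X]) hX (pd_append vη.pd vζ.pd))
        have := (hc _ hd).prefix (p ++ (y :: wd Γr)) (wd Γη ++ wd Γζ) (by simp)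
        rw [List.count_append, List.count_append, List.count_append, hp, hcon.1] at this
        omega
      · exact ht c (by simp [hcm])
    · intro c hcm
      rcases List.mem_append.1 hcm with hcm | hcm
      · exact hf c (by simp [hcm])
      rcases List.mem_cons.1 hcm with rfl | hcm
      · intro h; simp at h
      · exact hf c (by simp [hcm])

theorem pigeon {V : Type} [Fintype V] [DecidableEq V] {E κ : ℕ} (k : ℕ) :
    ∀ (S : Finset V) (Γ : List (El V)), Sᶜ.card = k → (∀ c ∈ Γ, c.w.count A ≤ E) →
    (k + 1) * (κ + 1 + E) ≤ (wd Γ).count A →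
    ∃ P Q R, Γ = P ++ (Q ++ R) ∧
      (∀ f ∈ Q, f.b = false → f.l ∈ S ∨ ∃ f' ∈ P, f'.b = false ∧ f'.l = f.l) ∧
      κ < (wd Q).count A := by
  induction k with
  | zero =>
    intro S Γ hS hE hn
    refine ⟨[], Γ, [], by simp, ?_, by omega⟩
    intro f _ _
    left
    rw [Finset.card_eq_zero, Finset.compl_eq_empty_iff] at hS
    rw [hS]; simp
  | succ k ih =>
    intro S Γ hS hE hn
    let t : El V → Bool := fun c => c.b || decide (c.l ∈ S)
    have hsplit := List.takeWhile_append_dropWhile (p := t) (l := Γ)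
    have hpre : ∀ f ∈ Γ.takeWhile t, f.b = false → f.l ∈ S := by
      intro f hf hb
      have := List.mem_takeWhile_imp hf
      simpa [t, hb] using this
    by_cases hκ : κ < (wd (Γ.takeWhile t)).count A
    · exact ⟨[], Γ.takeWhile t, Γ.dropWhile t, by simp,
        fun f hf hb => .inl (hpre f hf hb), hκ⟩
    rcases hdw : Γ.dropWhile t with _ | ⟨c, Γ'⟩
    · rw [hdw, List.append_nil] at hsplit
      rw [hsplit] at hκ
      exfalso
      nlinarith
    have hct : t c = false := by
      have := List.head_dropWhile_not t (l := Γ) (by rw [hdw]; simp)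
      simpa [hdw] using this
    simp only [t, Bool.or_eq_false_iff, decide_eq_false_iff_not] at hct
    rw [hdw] at hsplit
    have hEc : c.w.count A ≤ E := hE c (by rw [← hsplit]; simp)
    have hcard : (insert c.l S)ᶜ.card = k := by
      have h1 := Finset.card_compl_add_card S
      have h2 := Finset.card_compl_add_card (insert c.l S)
      rw [Finset.card_insert_of_notMem hct.2] at h2
      omega
    have hcount : (wd Γ).count A =
        (wd (Γ.takeWhile t)).count A + (c.w.count A + (wd Γ').count A) := by
      conv_lhs => rw [← hsplit]
      simp
    obtain ⟨P, Q, R, rfl, h1, h2⟩ := ih (insert c.l S) Γ' hcard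
      (fun d hd => hE d (by rw [← hsplit]; simp [hd])) (by nlinarith)
    refine ⟨Γ.takeWhile t ++ c :: P, Q, R, by simpa using hsplit.symm, ?_, h2⟩
    intro f hf hb
    rcases h1 f hf hb with h | ⟨f', hf', h⟩
    · rcases Finset.mem_insert.1 h with h | h
      · exact .inr ⟨c, by simp, hct.1, h.symm⟩
      · exact .inl h
    · exact .inr ⟨f', by simp [hf'], h⟩

theorem pd_sort {u : List Lt} {β : List G.V} (Q : List (El G.V)) :
    ∀ (π : List G.V), (∀ c ∈ Q, ∀ d ∈ Q, c.b = false → d.b = true → G.indep c.l d.l) →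
    PCDerives G (π ++ (lab (Q.filter (fun c => !c.b)) ++ (lab (Q.filter (fun c => c.b)) ++ β))) u →
    PCDerives G (π ++ (lab Q ++ β)) u := by
  induction Q with
  | nil => intro π _ h; simpa using h
  | cons c Q ih =>
    intro π hi h
    have hi' : ∀ c ∈ Q, ∀ d ∈ Q, c.b = false → d.b = true → G.indep c.l d.l :=
      fun c hc d hd => hi c (by simp [hc]) d (by simp [hd])
    have := ih (π ++ [c.l]) hi'
    simp only [List.append_assoc, List.cons_append, List.nil_append, lab_cons] at this ⊢
    apply this
    rcases hb : c.b with _ | _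
    · simpa [hb] using h
    · simp only [hb, List.filter_cons, Bool.not_true, Bool.false_eq_true, if_false, if_true,
        lab_cons, List.cons_append] at h
      refine (pd_move _ π ?_).2 h
      intro Z hZ
      obtain ⟨d, hd, rfl⟩ := List.mem_map.1 hZ
      simp only [List.mem_filter, Bool.not_eq_true'] at hd
      exact hi d (by simp [hd.1]) c (by simp) hd.2 hb

theorem wd_ee {Γ : List (El G.V)} (h : ∀ c ∈ Γ, (c.w.count y : ℤ) - c.w.count A = ee [c.l]) :
    ((wd Γ).count y : ℤ) - (wd Γ).count A = ee (lab Γ) := by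
  induction Γ with
  | nil => simp
  | cons c Γ ih =>
    have h1 := ih fun d hd => h d (by simp [hd])
    have h2 := h c (by simp)
    rw [lab_cons, ee_cons, ← h1, ← h2]
    simp; ring

theorem wd_count_filter {V : Type} (Q : List (El V)) (c : Lt) :
    (wd Q).count c = (wd (Q.filter (fun d => !d.b))).count c +
      (wd (Q.filter (fun d => d.b))).count c := by
  induction Q with
  | nil => simp
  | cons d Q ih =>
    rcases hb : d.b with _ | _ <;> simp [hb, ih] <;> omega

theorem wd_count_zero {V : Type} (Q : List (El V)) (c : Lt) (h : ∀ d ∈ Q, d.w.count c = 0) :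
    (wd Q).count c = 0 := by
  induction Q with
  | nil => simp
  | cons d Q ih =>
    have h1 := h d (by simp)
    have h2 := ih fun f hf => h f (by simp [hf])
    rw [wd_cons, List.count_append]; omega

theorem wd_count_le {V : Type} {Q : List (El V)} {d : El V} (c : Lt) (h : d ∈ Q) :
    d.w.count c ≤ (wd Q).count c := by
  obtain ⟨s, t, rfl⟩ := List.append_of_mem h
  simp; omega

end PC

theorem Lg_not_pccfl : ¬ IsPCCFL {w | Lg w} := by
  rintro ⟨G, hG⟩
  have hL : ∀ w, PCDerives G [G.start] w ↔ Lg w := fun w => by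
    have : w ∈ G.lang ↔ w ∈ {w | Lg w} := by rw [hG]
    exact this
  classical
  have := G.finV
  let _ : Fintype G.V := Fintype.ofFinite _
  obtain ⟨E, hE⟩ : ∃ E : ℕ, ∀ Z : G.V, (cw Z).length ≤ E :=
    ⟨Finset.univ.sup fun Z : G.V => (cw Z).length, fun Z =>
      Finset.le_sup (f := fun Z : G.V => (cw Z).length) (Finset.mem_univ Z)⟩
  obtain ⟨R, hR⟩ : ∃ R : ℕ, ∀ q ∈ G.prods, q.2.2.length ≤ R :=
    ⟨G.finP.toFinset.sup fun q => q.2.2.length, fun q hq =>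
      Finset.le_sup (f := fun q : G.V × Lt × List G.V => q.2.2.length)
        (G.finP.mem_toFinset.2 hq)⟩
  obtain ⟨κ, hκ⟩ : ∃ κ : ℕ, (κ : ℤ) = E + R * E := ⟨E + R * E, by push_cast; ring⟩
  let N := (Fintype.card G.V + 1) * (κ + 1 + E)
  let n := N + E
  have hctx0 : Ctx [] [G.start] := fun v hv => (hL v).1 hv
  have hstart : PCDerives G [G.start]
      (List.replicate n a ++ (List.replicate n y ++ x :: List.replicate n A)) :=
    (hL _).2 (by simpa using Lg_word n)
  have hcs : PCDerives G [G.start] (cw G.start) := (pd_der hstart).cw (by simp)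
  have hinv0 : PInv (E + R * E : ℤ) [G.start] := by
    refine ⟨[], G.start, [], rfl, ?_, ?_⟩
    · have := ((hL _).1 hcs).counts; omega
    · intro P Q h
      obtain ⟨rfl, rfl⟩ := List.append_eq_nil_iff.1 h.symm
      have := ee_bound hE [G.start]
      rw [abs_le] at this
      simp at this ⊢
      have : (0 : ℤ) ≤ R * E := by positivity
      linarith
  obtain ⟨γ, hctx, hinv, hγ⟩ := aphase hE hR n [] _ hctx0 hinv0 hstart
  rw [List.nil_append] at hctx
  obtain ⟨Γ, hlab, hval, hperm, hpw, ht, hf⟩ := yphase n (List.replicate n a) γ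
    (by simp [List.count_replicate]) hctx hγ
  obtain ⟨η, χ, τ, rfl, hχ, hb⟩ := hinv
  have hder := pd_der hγ
  obtain ⟨Γη, Γ2, rfl, rfl, h1⟩ := lab_split hlab
  obtain ⟨c, Γτ, rfl, rfl, rfl⟩ := lab_split_cons h1
  have hvw : ∀ d ∈ Γη ++ c :: Γτ, (d.w.count y : ℤ) - d.w.count A = ee [d.l] ∧
      (d.w.count A : ℤ) - d.w.count a = (cw d.l).count A - (cw d.l).count a ∧
      d.w.count x = (cw d.l).count x := by
    intro d hd
    have hm : d.l ∈ lab Γη ++ c.l :: lab Γτ := by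
      have := List.mem_map_of_mem (f := El.l) hd
      change d.l ∈ lab (Γη ++ c :: Γτ) at this
      simpa using this
    obtain ⟨s, t, hst⟩ := List.append_of_mem hm
    rw [hst] at hctx hder
    exact val_word hctx hder (hval d hd)
  have vη : Val Γη := fun d hd => hval d (by simp [hd])
  have vτ : Val Γτ := fun d hd => hval d (by simp [hd])
  have hfree := left_noA hctx vη.pd (hval c (by simp)) vτ.pd (by
    rw [(hvw c (by simp)).2.2]; exact hχ)
  have hcntA := hperm.count_eq A
  have hcnta := hperm.count_eq a
  simp only [wd_append, wd_cons, List.count_append, List.count_cons, List.count_replicate] at hcntA hcnta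
  simp at hcntA hcnta
  have hAE : ∀ d ∈ Γη ++ c :: Γτ, d.w.count A ≤ E := by
    intro d hd
    have h1 := (hvw d hd).2.1
    have h2 := wd_count_le a hd
    simp only [wd_append, wd_cons, List.count_append] at h2
    have h3 := len_counts (cw d.l)
    have h4 := hE d.l
    omega
  have hτA : N ≤ (wd Γτ).count A := by
    have := hAE c (by simp)
    omega
  obtain ⟨P, Q, R', rfl, hQ, hQA⟩ := pigeon (E := E) (κ := κ) (Fintype.card G.V) ∅ Γτ
    (by rw [Finset.compl_empty, Finset.card_univ])
    (fun d hd => hAE d (by simp [hd])) hτA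
  have hQind : ∀ f ∈ Q, ∀ d ∈ Q, f.b = false → d.b = true → G.indep f.l d.l := by
    intro f hfQ d hdQ hfb hdb
    rcases hQ f hfQ hfb with h | ⟨f', hf', hb', hl⟩
    · simp at h
    · rw [← hl]
      rw [List.pairwise_append] at hpw
      have h1 := (List.pairwise_cons.1 hpw.2.1).2
      rw [List.pairwise_append] at h1
      exact h1.2.2 f' hf' d (by simp [hdQ]) hb' hdb
  have vP : Val P := fun d hd => hval d (by simp [hd])
  have vR : Val R' := fun d hd => hval d (by simp [hd])
  have vQ1 : Val (Q.filter fun d => !d.b) := fun d hd => hval d (by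
    simp [(List.mem_filter.1 hd).1])
  have vQ2 : Val (Q.filter fun d => d.b) := fun d hd => hval d (by
    simp [(List.mem_filter.1 hd).1])
  have vL : Val (Γη ++ c :: P) := fun d hd => hval d (by
    simp at hd ⊢; tauto)
  have hd1 := pd_sort Q (lab (Γη ++ c :: P)) hQind
    (pd_append vL.pd (pd_append vQ1.pd (pd_append vQ2.pd vR.pd)))
  have hLg := hctx _ (by simpa only [lab_append, lab_cons, List.append_assoc, List.cons_append]
    using hd1)
  have hpre := hLg.prefix
    (List.replicate n a ++ wd (Γη ++ c :: P) ++ wd (Q.filter fun d => !d.b))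
    (wd (Q.filter fun d => d.b) ++ wd R') (by simp)
  have hQ2A : (wd (Q.filter fun d => d.b)).count A = 0 := by
    apply wd_count_zero
    intro d hd
    have hd' := List.mem_filter.1 hd
    rcases ht d (by simp [hd'.1]) hd'.2 with h | h
    · exfalso
      have h1 := wd_count_le x (Q := P ++ (Q ++ R')) (d := d) (by simp [hd'.1])
      omega
    · exact h
  have hQ1y : (wd (Q.filter fun d => !d.b)).count y = 0 := by
    apply wd_count_zero
    intro d hd
    have hd' := List.mem_filter.1 hd
    exact hf d (by simp [hd'.1]) (by simpa using hd'.2)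
  have hQs := wd_count_filter Q A
  have hees := wd_ee (Γ := Γη ++ c :: P) fun d hd => (hvw d (by simp at hd ⊢; tauto)).1
  have hbb := hb (lab P) (lab (Q ++ R')) (by simp)
  rw [lab_append, lab_cons, ee_append, ee_cons] at hees
  have h1 := hpre.1
  simp only [List.count_append, List.count_replicate] at h1
  simp only [show (a == A) = false from rfl, show (a == y) = false from rfl, hQ1y] at h1
  simp only [Bool.false_eq_true, if_false] at h1
  omega

/-- some language is in shuffleCFL but neither in PCCFL nor in traceCFL. -/
theorem exists_shufflecfl_not_pccfl_not_tracecfl :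
    ∃ (α : Type) (_ : Finite α) (L : Set (List α)),
      IsShuffleCFL L ∧ ¬ IsPCCFL L ∧ ¬ IsTraceCFL L := by
  exact ⟨Lt, Lt.fin, {w | Lg w}, Lg_shuffle, Lg_not_pccfl, Lg_not_trace⟩
end

section
/- Both PCCFL and trPCCFL are closed under shuffle: if languages L and K (over the same finite alphabet) belong to PCCFL then L || K belongs to PCCFL, and if L and K belong to trPCCFL then L || K belongs to trPCCFL. -/
namespace ShufflePf

variable {α : Type}

abbrev lf {A B : Type} (x : A) : Option (A ⊕ B) := some (Sum.inl x)
abbrev rt {A B : Type} (x : B) : Option (A ⊕ B) := some (Sum.inr x)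

def ind (G H : PCGrammar α) : Option (G.V ⊕ H.V) → Option (G.V ⊕ H.V) → Prop
  | none, none => False
  | none, some _ => True
  | some _, none => True
  | some (Sum.inl _), some (Sum.inr _) => True
  | some (Sum.inr _), some (Sum.inl _) => True
  | some (Sum.inl x), some (Sum.inl y) => G.indep x y
  | some (Sum.inr x), some (Sum.inr y) => H.indep x y

inductive Pr (G H : PCGrammar α) : Option (G.V ⊕ H.V) × α × List (Option (G.V ⊕ H.V)) → Prop
  | l {X a γ} : (X, a, γ) ∈ G.prods → Pr G H (lf X, a, γ.map lf)
  | r {X a γ} : (X, a, γ) ∈ H.prods → Pr G H (rt X, a, γ.map rt)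
  | sl {a γ} : (G.start, a, γ) ∈ G.prods → Pr G H (none, a, γ.map lf ++ [rt H.start])
  | sr {a γ} : (H.start, a, γ) ∈ H.prods → Pr G H (none, a, lf G.start :: γ.map rt)

theorem pr_fin (G H : PCGrammar α) : {p | Pr G H p}.Finite := by
  refine Set.Finite.subset
    (((G.finP.image (fun p => ((lf p.1 : Option (G.V ⊕ H.V)), p.2.1, p.2.2.map lf))).union
      (H.finP.image (fun p => ((rt p.1 : Option (G.V ⊕ H.V)), p.2.1, p.2.2.map rt)))).union
     ((G.finP.image (fun p => ((none : Option (G.V ⊕ H.V)), p.2.1, p.2.2.map lf ++ [rt H.start]))).union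
      (H.finP.image (fun p => ((none : Option (G.V ⊕ H.V)), p.2.1, lf G.start :: p.2.2.map rt))))) ?_
  rintro p hp
  cases hp with
  | l h => exact Or.inl (Or.inl ⟨_, h, rfl⟩)
  | r h => exact Or.inl (Or.inr ⟨_, h, rfl⟩)
  | sl h => exact Or.inr (Or.inl ⟨_, h, rfl⟩)
  | sr h => exact Or.inr (Or.inr ⟨_, h, rfl⟩)

abbrev sh (G H : PCGrammar α) : PCGrammar α where
  V := Option (G.V ⊕ H.V)
  finV := by
    have := G.finV
    have := H.finV
    infer_instance
  start := none
  prods := {p | Pr G H p}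
  finP := pr_fin G H
  indep := ind G H
  indep_symm := by
    rintro (_ | _ | _) (_ | _ | _) h <;> first | exact h | exact G.indep_symm h | exact H.indep_symm h
  indep_irrefl := by
    rintro (_ | x | x) h
    · exact h
    · exact G.indep_irrefl x h
    · exact H.indep_irrefl x h

theorem sh_tr {G H : PCGrammar α} (hG : G.depTransitive) (hH : H.depTransitive) :
    (sh G H).depTransitive := by
  rintro (_ | x | x) (_ | y | y) (_ | z | z) h1 h2 <;>
    first
    | exact hG x y z h1 h2
    | exact hH x y z h1 h2
    | exact absurd trivial h1
    | exact absurd trivial h2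
    | exact h1

def gl {A B : Type} : Option (A ⊕ B) → Option A
  | some (Sum.inl x) => some x
  | _ => none
def gr {A B : Type} : Option (A ⊕ B) → Option B
  | some (Sum.inr x) => some x
  | _ => none

section
variable {A B : Type}
theorem gl_l (γ : List A) : (γ.map (lf (B := B))).filterMap gl = γ := by
  induction γ <;> simp_all [gl]
theorem gl_r (γ : List B) : (γ.map (rt (A := A))).filterMap gl = [] := by
  induction γ <;> simp_all [gl]
theorem gr_l (γ : List A) : (γ.map (lf (B := B))).filterMap gr = [] := by
  induction γ <;> simp_all [gr]
theorem gr_r (γ : List B) : (γ.map (rt (A := A))).filterMap gr = γ := by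
  induction γ <;> simp_all [gr]
end

theorem fwd {G H : PCGrammar α} {c : List (sh G H).V} {w : List α} (h : PCDerives (sh G H) c w) :
    (none : Option (G.V ⊕ H.V)) ∉ (c : List (Option (G.V ⊕ H.V))) →
    ∃ u v, PCDerives G (List.filterMap (gl (B := H.V)) c) u ∧
      PCDerives H (List.filterMap (gr (A := G.V)) c) v ∧ IsInterleaving u v w := by
  induction h with
  | nil => exact fun _ => ⟨[], [], .nil, .nil, .nil⟩
  | @prod X a γ β w hp hd ih =>
    intro hn
    have hp' : Pr G H (X, a, γ) := hp
    cases hp' with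
    | @l X a γ h =>
      obtain ⟨u, v, hu, hv, hi⟩ := ih (by
        intro hm
        rcases List.mem_append.1 hm with hm | hm
        · simp at hm
        · exact hn (List.mem_cons_of_mem _ hm))
      rw [List.filterMap_append, gl_l] at hu
      rw [List.filterMap_append, gr_l] at hv
      exact ⟨a :: u, v, .prod h hu, hv, .left hi⟩
    | @r X a γ h =>
      obtain ⟨u, v, hu, hv, hi⟩ := ih (by
        intro hm
        rcases List.mem_append.1 hm with hm | hm
        · simp at hm
        · exact hn (List.mem_cons_of_mem _ hm))
      rw [List.filterMap_append, gl_r] at hu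
      rw [List.filterMap_append, gr_r] at hv
      exact ⟨u, a :: v, hu, .prod h hv, .right hi⟩
    | sl h => exact absurd List.mem_cons_self hn
    | sr h => exact absurd List.mem_cons_self hn
  | @swap η β X Y w hi hd ih =>
    intro hn
    obtain ⟨u, v, hu, hv, hw⟩ := ih (by
      intro hm; apply hn
      rcases List.mem_append.1 hm with hm | hm
      · exact List.mem_append_left _ hm
      · apply List.mem_append_right
        rcases List.mem_cons.1 hm with hm | hm
        · exact hm ▸ List.mem_cons_of_mem _ List.mem_cons_self
        · rcases List.mem_cons.1 hm with hm | hm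
          · exact hm ▸ List.mem_cons_self
          · exact List.mem_cons_of_mem _ (List.mem_cons_of_mem _ hm))
    refine ⟨u, v, ?_, ?_, hw⟩
    · rw [List.filterMap_append] at hu ⊢
      rcases X with _ | x | x <;> rcases Y with _ | y | y <;>
        first | exact hu | exact PCDerives.swap (G := G) hi hu
    · rw [List.filterMap_append] at hv ⊢
      rcases X with _ | x | x <;> rcases Y with _ | y | y <;>
        first | exact hv | exact PCDerives.swap (G := H) hi hv

theorem move1 {G : PCGrammar α} (x : G.V) (β : List G.V) (w : List α) (q : List G.V) :
    ∀ (η : List G.V), (∀ y ∈ q, G.indep y x) →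
      PCDerives G (η ++ x :: (q ++ β)) w → PCDerives G (η ++ (q ++ x :: β)) w := by
  induction q with
  | nil => intro η _ h; exact h
  | cons y q ih =>
    intro η hq h
    have h2 := ih (η ++ [y]) (fun z hz => hq z (List.mem_cons_of_mem _ hz)) (by
      have := PCDerives.swap (η := η) (β := q ++ β) (w := w) (hq y List.mem_cons_self) h
      simpa using this)
    simpa using h2

theorem move {G : PCGrammar α} (q β : List G.V) (w : List α) (p : List G.V) :
    ∀ (η : List G.V), (∀ x ∈ p, ∀ y ∈ q, G.indep y x) →
      PCDerives G (η ++ (p ++ (q ++ β))) w → PCDerives G (η ++ (q ++ (p ++ β))) w := by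
  induction p with
  | nil => intro η _ h; exact h
  | cons x p ih =>
    intro η hq h
    have h2 := ih (η ++ [x]) (fun z hz => hq z (List.mem_cons_of_mem _ hz)) (by simpa using h)
    exact move1 x (p ++ β) w q η (hq x List.mem_cons_self) (by simpa using h2)

theorem lr_ind {G H : PCGrammar α} (p : List G.V) (q : List H.V) :
    ∀ x ∈ p.map (lf (B := H.V)), ∀ y ∈ q.map (rt (A := G.V)), (sh G H).indep y x := by
  intro x hx y hy
  obtain ⟨x, _, rfl⟩ := List.mem_map.1 hx
  obtain ⟨y, _, rfl⟩ := List.mem_map.1 hy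
  trivial

theorem rl_ind {G H : PCGrammar α} (p : List G.V) (q : List H.V) :
    ∀ y ∈ q.map (rt (A := G.V)), ∀ x ∈ p.map (lf (B := H.V)), (sh G H).indep x y := by
  intro y hy x hx
  exact (sh G H).indep_symm (lr_ind p q x hx y hy)

def cat (G H : PCGrammar α) (c : List G.V) (d : List H.V) : List (sh G H).V :=
  c.map (lf (B := H.V)) ++ d.map (rt (A := G.V))

theorem cat_prodL {G H : PCGrammar α} {X : G.V} {a γ β d w} (h : (X, a, γ) ∈ G.prods)
    (hd : PCDerives (sh G H) (cat G H (γ ++ β) d) w) :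
    PCDerives (sh G H) (cat G H (X :: β) d) (a :: w) := by
  refine PCDerives.prod (G := sh G H) (X := lf X) (γ := γ.map lf)
    (β := cat G H β d) (Pr.l h) ?_
  simpa [cat] using hd

theorem cat_prodR {G H : PCGrammar α} {X : H.V} {a γ β c w} (h : (X, a, γ) ∈ H.prods)
    (hd : PCDerives (sh G H) (cat G H c (γ ++ β)) w) :
    PCDerives (sh G H) (cat G H c (X :: β)) (a :: w) := by
  have h1 := move (G := sh G H) (γ.map (rt (A := G.V))) (β.map (rt (A := G.V))) w
    (c.map (lf (B := H.V))) [] (lr_ind c γ) (by simpa [cat] using hd)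
  have h2 := PCDerives.prod (G := sh G H) (Pr.r h) h1
  have h3 := move (G := sh G H) (c.map (lf (B := H.V))) (β.map (rt (A := G.V))) (a :: w)
    ([X].map (rt (A := G.V))) [] (rl_ind c [X]) h2
  exact h3

theorem cat_swapL {G H : PCGrammar α} {X Y : G.V} {η β d w} (h : G.indep X Y)
    (hd : PCDerives (sh G H) (cat G H (η ++ Y :: X :: β) d) w) :
    PCDerives (sh G H) (cat G H (η ++ X :: Y :: β) d) w := by
  have := PCDerives.swap (G := sh G H) (η := η.map lf) (β := cat G H β d) (X := lf X) (Y := lf Y)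
    (w := w) h (by simpa [cat] using hd)
  simpa [cat] using this

theorem cat_swapR {G H : PCGrammar α} {X Y : H.V} {η β c w} (h : H.indep X Y)
    (hd : PCDerives (sh G H) (cat G H c (η ++ Y :: X :: β)) w) :
    PCDerives (sh G H) (cat G H c (η ++ X :: Y :: β)) w := by
  have := PCDerives.swap (G := sh G H) (η := cat G H c η) (β := β.map rt) (X := rt X) (Y := rt Y)
    (w := w) h (by simpa [cat] using hd)
  simpa [cat] using this

theorem bwd {G H : PCGrammar α} {c u} (h : PCDerives G c u) :
    ∀ {d v w}, PCDerives H d v → IsInterleaving u v w → PCDerives (sh G H) (cat G H c d) w := by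
  induction h with
  | nil =>
    intro d v w h2
    induction h2 generalizing w with
    | nil => intro hi; cases hi; exact .nil
    | prod hp _ ih =>
      intro hi
      cases hi with
      | right hi => exact cat_prodR hp (ih hi)
    | swap hi _ ih => intro h; exact cat_swapR hi (ih h)
  | swap hi _ ih => intro d v w h2 h; exact cat_swapL hi (ih h2 h)
  | prod hp hd ih1 =>
    intro d v w h2
    induction h2 generalizing w with
    | nil =>
      intro hi
      cases hi with
      | left hi => exact cat_prodL hp (ih1 .nil hi)
    | prod hp2 hd2 ih =>
      intro hi
      cases hi with
      | left hi => exact cat_prodL hp (ih1 (.prod hp2 hd2) hi)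
      | right hi => exact cat_prodR hp2 (ih hi)
    | swap hi _ ih => intro h; exact cat_swapR hi (ih h)

theorem start_inv {G : PCGrammar α} {X : G.V} {w} (h : PCDerives G [X] w) :
    ∃ a γ w', w = a :: w' ∧ (X, a, γ) ∈ G.prods ∧ PCDerives G γ w' := by
  generalize hc : [X] = c at h
  cases h with
  | nil => simp at hc
  | @prod Y a γ β w hp hd =>
    simp only [List.cons.injEq] at hc
    obtain ⟨rfl, rfl⟩ := hc
    exact ⟨a, γ, w, rfl, hp, by simpa using hd⟩
  | swap _ _ =>
    have := congrArg List.length hc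
    simp at this
    omega

theorem lang_sh (G H : PCGrammar α) : (sh G H).lang = shuffleLang G.lang H.lang := by
  ext w
  constructor
  · intro h
    obtain ⟨a, γ, w', rfl, hp, hd⟩ := start_inv (G := sh G H) h
    have hp' : Pr G H (none, a, γ) := hp
    cases hp' with
    | @sl a γ h =>
      obtain ⟨u, v, hu, hv, hi⟩ := fwd hd (by simp)
      rw [List.filterMap_append, gl_l] at hu
      rw [List.filterMap_append, gr_l] at hv
      exact ⟨a :: u, .prod h hu, v, hv, .left hi⟩
    | @sr a γ h =>
      obtain ⟨u, v, hu, hv, hi⟩ := fwd hd (by simp)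
      have e1 : List.filterMap (gl (B := H.V)) (lf G.start :: γ.map rt) = [G.start] :=
        congrArg (G.start :: ·) (gl_r γ)
      have e2 : List.filterMap (gr (A := G.V)) (lf G.start :: γ.map rt) = γ := gr_r γ
      rw [e1] at hu
      rw [e2] at hv
      exact ⟨u, hu, a :: v, .prod h (by simpa using hv), .right hi⟩
  · rintro ⟨u, hu, v, hv, hi⟩
    cases hi with
    | nil =>
      obtain ⟨a, γ, w', h, _⟩ := start_inv (G := G) hu
      cases h
    | left hi =>
      obtain ⟨a, γ, w', h, hp, hd⟩ := start_inv (G := G) hu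
      cases h
      have := bwd hd hv hi
      exact PCDerives.prod (G := sh G H) (β := []) (Pr.sl hp) (by simpa [cat] using this)
    | right hi =>
      obtain ⟨a, γ, w', h, hp, hd⟩ := start_inv (G := H) hv
      cases h
      have := bwd hu hd hi
      exact PCDerives.prod (G := sh G H) (β := []) (Pr.sr hp) (by simpa [cat] using this)

end ShufflePf

/-- PCCFL and trPCCFL are both closed under shuffle. -/
theorem pccfl_trpccfl_closed_under_shuffle (α : Type) [Finite α] (L K : Set (List α)) :
    (IsPCCFL L → IsPCCFL K → IsPCCFL (shuffleLang L K)) ∧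
    (IsTrPCCFL L → IsTrPCCFL K → IsTrPCCFL (shuffleLang L K)) := by
  constructor
  · rintro ⟨G, rfl⟩ ⟨H, rfl⟩
    exact ⟨ShufflePf.sh G H, ShufflePf.lang_sh G H⟩
  · rintro ⟨G, hG, rfl⟩ ⟨H, hH, rfl⟩
    exact ⟨ShufflePf.sh G H, ShufflePf.sh_tr hG hH, ShufflePf.lang_sh G H⟩
end

section
/- PCCFL is closed under concatenation: if languages L and K (over the same finite alphabet) belong to PCCFL, then the concatenation L·K = { u·v : u ∈ L, v ∈ K } belongs to PCCFL. -/
namespace PCConcat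

/-- Independence for the concatenation grammar. -/
inductive Ind {A B : Type} (r : A → A → Prop) (s : B → B → Prop) :
    Option (A ⊕ B) → Option (A ⊕ B) → Prop
  | l {x y : A} : r x y → Ind r s (some (Sum.inl x)) (some (Sum.inl y))
  | r {x y : B} : s x y → Ind r s (some (Sum.inr x)) (some (Sum.inr y))

def lf {A B : Type} (x : A) : Option (A ⊕ B) := some (Sum.inl x)
def rt {A B : Type} (x : B) : Option (A ⊕ B) := some (Sum.inr x)

/-- The concatenation grammar. -/
def cg {α : Type} (G H : PCGrammar α) : PCGrammar α where
  V := Option (G.V ⊕ H.V)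
  finV := by
    have := G.finV
    have := H.finV
    infer_instance
  start := none
  prods := ((fun p : G.V × α × List G.V => (lf p.1, p.2.1, p.2.2.map lf)) '' G.prods ∪
    (fun p : H.V × α × List H.V => (rt p.1, p.2.1, p.2.2.map rt)) '' H.prods) ∪
    (fun p : G.V × α × List G.V => (none, p.2.1, p.2.2.map lf ++ [rt H.start])) ''
      (G.prods ∩ {p | p.1 = G.start})
  finP := ((G.finP.image _).union (H.finP.image _)).union ((G.finP.inter_of_left _).image _)
  indep := Ind G.indep H.indep
  indep_symm := by
    rintro X Y (h | h)
    · exact .l (G.indep_symm h)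
    · exact .r (H.indep_symm h)
  indep_irrefl := by
    rintro X h
    cases h with
    | l h => exact G.indep_irrefl _ h
    | r h => exact H.indep_irrefl _ h

variable {α : Type} {G H : PCGrammar α}

def il (G H : PCGrammar α) (x : G.V) : (cg G H).V := (lf x : Option (G.V ⊕ H.V))
def ir (G H : PCGrammar α) (x : H.V) : (cg G H).V := (rt x : Option (G.V ⊕ H.V))

theorem il_inj {x y : G.V} (h : il G H x = il G H y) : x = y :=
  Sum.inl.inj (Option.some.inj h)
theorem ir_inj {x y : H.V} (h : ir G H x = ir G H y) : x = y :=
  Sum.inr.inj (Option.some.inj h)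
theorem il_ne {x : G.V} {y : H.V} (h : il G H x = ir G H y) : False :=
  Sum.inl_ne_inr (Option.some.inj h)
theorem il_ns {x : G.V} (h : il G H x = (cg G H).start) : False :=
  Option.some_ne_none _ h
theorem ir_ns {x : H.V} (h : ir G H x = (cg G H).start) : False :=
  Option.some_ne_none _ h

theorem mem_prods {X : (cg G H).V} {a : α} {ζ : List (cg G H).V}
    (h : (X, a, ζ) ∈ (cg G H).prods) :
    (∃ x γ, (x, a, γ) ∈ G.prods ∧ X = il G H x ∧ ζ = γ.map (il G H)) ∨
    (∃ x γ, (x, a, γ) ∈ H.prods ∧ X = ir G H x ∧ ζ = γ.map (ir G H)) ∨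
    (∃ γ, (G.start, a, γ) ∈ G.prods ∧ X = (cg G H).start ∧
      ζ = γ.map (il G H) ++ [H.start].map (ir G H)) := by
  rcases h with (⟨⟨p, b, q⟩, hp, e⟩ | ⟨⟨p, b, q⟩, hp, e⟩) | ⟨⟨p, b, q⟩, ⟨hp, hs⟩, e⟩
  · cases e
    exact Or.inl ⟨p, q, hp, rfl, rfl⟩
  · cases e
    exact Or.inr (Or.inl ⟨p, q, hp, rfl, rfl⟩)
  · cases e
    cases hs
    exact Or.inr (Or.inr ⟨q, hp, rfl, rfl⟩)

theorem ind_cases {X Y : (cg G H).V} (h : (cg G H).indep X Y) :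
    (∃ x y, G.indep x y ∧ X = il G H x ∧ Y = il G H y) ∨
    (∃ x y, H.indep x y ∧ X = ir G H x ∧ Y = ir G H y) := by
  cases h with
  | l h => exact Or.inl ⟨_, _, h, rfl, rfl⟩
  | r h => exact Or.inr ⟨_, _, h, rfl, rfl⟩

def cf (G H : PCGrammar α) (γ : List G.V) (δ : List H.V) : List (cg G H).V :=
  γ.map (il G H) ++ δ.map (ir G H)

theorem emb_r {δ : List H.V} {v : List α} (h : PCDerives H δ v) :
    PCDerives (cg G H) (cf G H [] δ) v := by
  induction h with
  | nil => exact .nil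
  | @prod X a γ β w hp _ ih =>
    refine PCDerives.prod (G := cg G H) (X := (ir G H) X) (γ := γ.map (ir G H)) (β := β.map (ir G H)) ?_ ?_
    · exact Or.inl (Or.inr ⟨_, hp, rfl⟩)
    · simpa [cf] using ih
  | @swap η β X Y w hi _ ih =>
    have := PCDerives.swap (G := cg G H) (X := (ir G H) X) (Y := (ir G H) Y) (η := η.map (ir G H))
      (β := β.map (ir G H)) (w := w) (.r hi) (by simpa [cf] using ih)
    simpa [cf] using this

theorem emb {γ : List G.V} {u : List α} (h : PCDerives G γ u) {δ : List H.V} {v : List α}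
    (h' : PCDerives H δ v) : PCDerives (cg G H) (cf G H γ δ) (u ++ v) := by
  induction h with
  | nil => exact emb_r h'
  | @prod X a γ β w hp _ ih =>
    refine PCDerives.prod (G := cg G H) (X := (il G H) X) (γ := γ.map (il G H))
      (β := β.map (il G H) ++ δ.map (ir G H)) ?_ ?_
    · exact Or.inl (Or.inl ⟨_, hp, rfl⟩)
    · simpa [cf] using ih
  | @swap η β X Y w hi _ ih =>
    have := PCDerives.swap (G := cg G H) (X := (il G H) X) (Y := (il G H) Y) (η := η.map (il G H))
      (β := β.map (il G H) ++ δ.map (ir G H)) (w := w ++ v) (.l hi) (by simpa [cf] using ih)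
    simpa [cf] using this

theorem split_l {x y : G.V} {η β : List (cg G H).V} (γ : List G.V) (δ : List H.V)
    (h : η ++ il G H x :: il G H y :: β = cf G H γ δ) :
    ∃ η' β', γ = η' ++ x :: y :: β' ∧ η = η'.map (il G H) ∧ β = cf G H β' δ := by
  unfold cf at h
  induction γ generalizing η with
  | nil =>
    have : il G H x ∈ δ.map (ir G H) := by
      rw [List.map_nil, List.nil_append] at h
      rw [← h]; simp
    obtain ⟨z, -, hz⟩ := List.mem_map.1 this
    exact (il_ne hz.symm).elim
  | cons z γ ih =>
    cases η with
    | nil =>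
      cases γ with
      | nil =>
        cases δ with
        | nil => simp at h
        | cons d δ =>
          simp at h
          exact (il_ne h.2.1).elim
      | cons z' γ =>
        simp at h
        obtain ⟨h1, h2, h3⟩ := h
        cases il_inj h1
        cases il_inj h2
        exact ⟨[], γ, rfl, rfl, h3⟩
    | cons e η =>
      simp only [List.cons_append, List.map_cons, List.cons.injEq] at h
      obtain ⟨η', β', h1, h2, h3⟩ := ih h.2
      exact ⟨z :: η', β', by simp [h1], by simp [h2, h.1], h3⟩

theorem split_r {x y : H.V} {η β : List (cg G H).V} (γ : List G.V) (δ : List H.V)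
    (h : η ++ ir G H x :: ir G H y :: β = cf G H γ δ) :
    ∃ η' β', δ = η' ++ x :: y :: β' ∧ η = cf G H γ η' ∧ β = β'.map (ir G H) := by
  unfold cf at h
  induction γ generalizing η with
  | nil =>
    rw [List.map_nil, List.nil_append, eq_comm, List.map_eq_append_iff] at h
    obtain ⟨l1, l2, rfl, rfl, h⟩ := h
    rw [List.map_eq_cons_iff] at h
    obtain ⟨a, l3, rfl, h1, h⟩ := h
    rw [List.map_eq_cons_iff] at h
    obtain ⟨b, l4, rfl, h2, h⟩ := h
    cases ir_inj h1
    cases ir_inj h2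
    exact ⟨l1, l4, rfl, rfl, h.symm⟩
  | cons z γ ih =>
    cases η with
    | nil =>
      simp at h
      exact (il_ne h.1.symm).elim
    | cons e η =>
      simp only [List.cons_append, List.map_cons, List.cons.injEq] at h
      obtain ⟨η', β', h1, h2, h3⟩ := ih h.2
      exact ⟨η', β', h1, by simp [cf, h2, h.1], h3⟩

theorem nil_word {G : PCGrammar α} {u : List α} (h : PCDerives G [] u) : u = [] := by
  generalize hz : ([] : List G.V) = z at h
  cases h <;> simp at hz ⊢

theorem inv {c : List (cg G H).V} {w : List α} (h : PCDerives (cg G H) c w) :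
    ∀ γ δ, c = cf G H γ δ → ∃ u v, w = u ++ v ∧ PCDerives G γ u ∧ PCDerives H δ v := by
  induction h with
  | nil =>
    intro γ δ h
    simp [cf] at h
    obtain ⟨rfl, rfl⟩ := h
    exact ⟨[], [], rfl, .nil, .nil⟩
  | @prod X a ζ β w hp _ ih =>
    intro γ δ h
    cases γ with
    | nil =>
      cases δ with
      | nil => simp [cf] at h
      | cons y δ =>
        simp [cf] at h
        obtain ⟨rfl, rfl⟩ := h
        rcases mem_prods hp with ⟨x, q, hq, e, rfl⟩ | ⟨x, q, hq, e, rfl⟩ | ⟨q, hq, e, rfl⟩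
        · exact (il_ne e.symm).elim
        · cases ir_inj e
          obtain ⟨u, v, rfl, h1, h2⟩ := ih [] (q ++ δ) (by simp [cf])
          cases nil_word h1
          exact ⟨[], a :: v, rfl, .nil, .prod hq h2⟩
        · exact (ir_ns e).elim
    | cons y γ =>
      simp [cf] at h
      obtain ⟨rfl, rfl⟩ := h
      rcases mem_prods hp with ⟨x, q, hq, e, rfl⟩ | ⟨x, q, hq, e, rfl⟩ | ⟨q, hq, e, rfl⟩
      · cases il_inj e
        obtain ⟨u, v, rfl, h1, h2⟩ := ih (q ++ γ) δ (by simp [cf])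
        exact ⟨a :: u, v, rfl, .prod hq h1, h2⟩
      · exact (il_ne e).elim
      · exact (il_ns e).elim
  | @swap η β X Y w hi _ ih =>
    intro γ δ h
    rcases ind_cases hi with ⟨x, y, hxy, rfl, rfl⟩ | ⟨x, y, hxy, rfl, rfl⟩
    · obtain ⟨η', β', rfl, rfl, rfl⟩ := split_l γ δ h
      obtain ⟨u, v, rfl, h1, h2⟩ := ih (η' ++ y :: x :: β') δ (by simp [cf])
      exact ⟨u, v, rfl, .swap hxy h1, h2⟩
    · obtain ⟨η', β', rfl, rfl, rfl⟩ := split_r γ δ h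
      obtain ⟨u, v, rfl, h1, h2⟩ := ih γ (η' ++ y :: x :: β') (by simp [cf])
      exact ⟨u, v, rfl, h1, .swap hxy h2⟩

theorem single {G : PCGrammar α} {X : G.V} {w : List α} (h : PCDerives G [X] w) :
    ∃ a γ w', w = a :: w' ∧ (X, a, γ) ∈ G.prods ∧ PCDerives G γ w' := by
  generalize hc : [X] = c at h
  cases h with
  | nil => simp at hc
  | prod hp h =>
    simp at hc
    obtain ⟨rfl, rfl⟩ := hc
    exact ⟨_, _, _, rfl, hp, by simpa using h⟩
  | swap =>
    have := congrArg List.length hc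
    simp at this
    omega

end PCConcat

open PCConcat in
/-- PCCFL is closed under concatenation. -/
theorem pccfl_closed_under_concat (α : Type) [Finite α] (L K : Set (List α))
    (hL : IsPCCFL L) (hK : IsPCCFL K) :
    IsPCCFL {w | ∃ u ∈ L, ∃ v ∈ K, w = u ++ v} := by
  obtain ⟨G, rfl⟩ := hL
  obtain ⟨H, rfl⟩ := hK
  refine ⟨cg G H, Set.ext fun w => ⟨fun h => ?_, ?_⟩⟩
  · obtain ⟨a, γ, w', rfl, hp, h⟩ := single h
    rcases mem_prods hp with ⟨x, q, hq, e, rfl⟩ | ⟨x, q, hq, e, rfl⟩ | ⟨q, hq, e, rfl⟩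
    · exact (il_ns e.symm).elim
    · exact (ir_ns e.symm).elim
    · obtain ⟨u, v, rfl, h1, h2⟩ := inv h q [H.start] rfl
      exact ⟨a :: u, .prod hq (by simpa using h1), v, h2, rfl⟩
  · rintro ⟨u, hu, v, hv, rfl⟩
    obtain ⟨a, γ, u', rfl, hp, h⟩ := single hu
    refine PCDerives.prod (G := cg G H) (X := none) (γ := cf G H γ [H.start]) (β := []) ?_ ?_
    · exact Or.inr ⟨_, ⟨hp, rfl⟩, rfl⟩
    · rw [List.append_nil]
      exact emb h hv
end

section
/- PCCFL is closed under ε-free substitutions: if L ∈ PCCFL is a language over a finite alphabet Σ, and s assigns to each letter a ∈ Σ a language s(a) ∈ PCCFL with ε ∉ s(a), then the substitution L[s] — consisting of all words obtained from some word a₁a₂…a_k ∈ L by replacing each letter a_i by an arbitrary word of s(a_i), i.e., L[s] = ⋃_{a₁…a_k ∈ L} s(a₁)·s(a₂)·…·s(a_k) — belongs to PCCFL. In particular, PCCFL is closed under images of homomorphisms h with h(a) ≠ ε for every letter a. -/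
inductive SubIndep {α β : Type} (G : PCGrammar α) (H : α → PCGrammar β) :
    (G.V ⊕ (Σ a, (H a).V)) → (G.V ⊕ (Σ a, (H a).V)) → Prop
  | outer {X Y : G.V} : G.indep X Y → SubIndep G H (Sum.inl X) (Sum.inl Y)
  | inner {a : α} {X Y : (H a).V} : (H a).indep X Y →
      SubIndep G H (Sum.inr ⟨a, X⟩) (Sum.inr ⟨a, Y⟩)

def subIn {α β : Type} (G : PCGrammar α) (H : α → PCGrammar β) (a : α) (X : (H a).V) :
    G.V ⊕ (Σ a, (H a).V) := Sum.inr ⟨a, X⟩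

def subProds {α β : Type} (G : PCGrammar α) (H : α → PCGrammar β) :
    Set ((G.V ⊕ (Σ a, (H a).V)) × β × List (G.V ⊕ (Σ a, (H a).V))) :=
  (⋃ p ∈ G.prods, (fun q : (H p.2.1).V × β × List (H p.2.1).V =>
      (Sum.inl p.1, q.2.1, q.2.2.map (subIn G H p.2.1) ++ p.2.2.map Sum.inl)) ''
        {q ∈ (H p.2.1).prods | q.1 = (H p.2.1).start}) ∪
  (⋃ a : α, (fun q : (H a).V × β × List (H a).V =>
      (subIn G H a q.1, q.2.1, q.2.2.map (subIn G H a))) '' (H a).prods)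

def subGrammar {α β : Type} [Finite α] (G : PCGrammar α) (H : α → PCGrammar β) : PCGrammar β where
  V := G.V ⊕ (Σ a, (H a).V)
  finV := by
    have := G.finV
    have := fun a => (H a).finV
    infer_instance
  start := Sum.inl G.start
  prods := subProds G H
  finP := by
    apply Set.Finite.union
    · exact G.finP.biUnion fun p _ => ((H p.2.1).finP.subset (Set.sep_subset _ _)).image _
    · exact Set.finite_iUnion fun a => (H a).finP.image _
  indep := SubIndep G H
  indep_symm := by
    intro X Y h
    cases h with
    | outer h => exact .outer (G.indep_symm h)
    | inner h => exact .inner ((H _).indep_symm h)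
  indep_irrefl := by
    intro X h
    cases h with
    | outer h => exact G.indep_irrefl _ h
    | inner h => exact (H _).indep_irrefl _ h

theorem subProds_inl {α β : Type} {G : PCGrammar α} {H : α → PCGrammar β} {X : G.V} {b : β}
    {c : List (G.V ⊕ (Σ a, (H a).V))} :
    (Sum.inl X, b, c) ∈ subProds G H ↔ ∃ a γ δ, (X, a, γ) ∈ G.prods ∧
      ((H a).start, b, δ) ∈ (H a).prods ∧ c = δ.map (subIn G H a) ++ γ.map Sum.inl := by
  constructor
  · rintro (h | h)
    · simp only [Set.mem_iUnion] at h
      obtain ⟨⟨X', a, γ⟩, hp, ⟨S, b', δ⟩, ⟨hq, hS⟩, heq⟩ := h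
      simp only at hS
      subst hS
      simp only [Prod.mk.injEq, Sum.inl.injEq] at heq
      obtain ⟨rfl, rfl, rfl⟩ := heq
      exact ⟨a, γ, δ, hp, hq, rfl⟩
    · simp only [Set.mem_iUnion] at h
      obtain ⟨a, ⟨S, b', δ⟩, hq, heq⟩ := h
      simp [subIn] at heq
  · rintro ⟨a, γ, δ, hp, hq, rfl⟩
    left
    simp only [Set.mem_iUnion]
    exact ⟨(X, a, γ), hp, ((H a).start, b, δ), ⟨hq, rfl⟩, rfl⟩

theorem subProds_inr {α β : Type} {G : PCGrammar α} {H : α → PCGrammar β} {a : α} {X : (H a).V}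
    {b : β} {c : List (G.V ⊕ (Σ a, (H a).V))} :
    (subIn G H a X, b, c) ∈ subProds G H ↔ ∃ δ, (X, b, δ) ∈ (H a).prods ∧
      c = δ.map (subIn G H a) := by
  constructor
  · rintro (h | h)
    · simp only [Set.mem_iUnion] at h
      obtain ⟨⟨X', a, γ⟩, hp, ⟨S, b', δ⟩, ⟨hq, hS⟩, heq⟩ := h
      simp [subIn] at heq
    · simp only [Set.mem_iUnion] at h
      obtain ⟨a', ⟨S, b', δ⟩, hq, heq⟩ := h
      simp only [Prod.mk.injEq, subIn, Sum.inr.injEq, Sigma.mk.injEq] at heq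
      obtain ⟨⟨rfl, h⟩, rfl, rfl⟩ := heq
      cases h
      exact ⟨δ, hq, rfl⟩
  · rintro ⟨δ, hq, rfl⟩
    right
    simp only [Set.mem_iUnion]
    exact ⟨a, (X, b, δ), hq, rfl⟩

def eO {α β : Type} [Finite α] (G : PCGrammar α) (H : α → PCGrammar β) (X : G.V) :
    (subGrammar G H).V := Sum.inl X

def eI {α β : Type} [Finite α] (G : PCGrammar α) (H : α → PCGrammar β) (a : α) (X : (H a).V) :
    (subGrammar G H).V := subIn G H a X

theorem prods_eO {α β : Type} [Finite α] {G : PCGrammar α} {H : α → PCGrammar β} {X : G.V} {b : β}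
    {c : List (subGrammar G H).V} :
    (eO G H X, b, c) ∈ (subGrammar G H).prods ↔ ∃ a γ δ, (X, a, γ) ∈ G.prods ∧
      ((H a).start, b, δ) ∈ (H a).prods ∧ c = δ.map (eI G H a) ++ γ.map (eO G H) :=
  subProds_inl

theorem prods_eI {α β : Type} [Finite α] {G : PCGrammar α} {H : α → PCGrammar β} {a : α}
    {X : (H a).V} {b : β} {c : List (subGrammar G H).V} :
    (eI G H a X, b, c) ∈ (subGrammar G H).prods ↔ ∃ δ, (X, b, δ) ∈ (H a).prods ∧
      c = δ.map (eI G H a) :=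
  subProds_inr

theorem indep_eO {α β : Type} [Finite α] {G : PCGrammar α} {H : α → PCGrammar β} {X Y : G.V} :
    (subGrammar G H).indep (eO G H X) (eO G H Y) ↔ G.indep X Y := by
  constructor
  · intro h
    cases h with
    | outer h => exact h
  · exact SubIndep.outer

theorem indep_eI {α β : Type} [Finite α] {G : PCGrammar α} {H : α → PCGrammar β} {a : α}
    {X Y : (H a).V} :
    (subGrammar G H).indep (eI G H a X) (eI G H a Y) ↔ (H a).indep X Y := by
  constructor
  · intro h
    cases h with
    | inner h => exact h
  · exact SubIndep.inner

theorem indep_eI_eO {α β : Type} [Finite α] {G : PCGrammar α} {H : α → PCGrammar β} {a : α}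
    {X : (H a).V} {Y : G.V} : ¬ (subGrammar G H).indep (eI G H a X) (eO G H Y) := by
  intro h
  cases h

theorem PCDerives.single_inv {α : Type} {G : PCGrammar α} {X : G.V} {w : List α}
    (h : PCDerives G [X] w) :
    ∃ b δ u, w = b :: u ∧ (X, b, δ) ∈ G.prods ∧ PCDerives G δ u := by
  generalize hc : [X] = c at h
  cases h with
  | nil => simp at hc
  | prod hp hd =>
    simp only [List.cons.injEq] at hc
    obtain ⟨rfl, rfl⟩ := hc
    exact ⟨_, _, _, rfl, hp, by simpa using hd⟩
  | swap hi hd =>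
    have := congrArg List.length hc
    simp at this
    omega

/-- The semantic substitution of a configuration. -/
def SubSem {α β : Type} (G : PCGrammar α) (H : α → PCGrammar β) (c : List G.V) (w : List β) :
    Prop :=
  ∃ l, PCDerives G c l ∧ ∃ parts : List (List β),
    List.Forall₂ (fun a u => u ∈ (H a).lang) l parts ∧ w = parts.flatten

theorem sub_complete_inner {α β : Type} [Finite α] {G : PCGrammar α} {H : α → PCGrammar β} {a : α}
    {δ : List (H a).V} {u : List β} (h : PCDerives (H a) δ u) {c : List (subGrammar G H).V}
    {v : List β} (hc : PCDerives (subGrammar G H) c v) :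
    PCDerives (subGrammar G H) (δ.map (eI G H a) ++ c) (u ++ v) := by
  induction h with
  | nil => simpa using hc
  | prod hp _ ih =>
    refine PCDerives.prod (G := subGrammar G H) (prods_eI.2 ⟨_, hp, rfl⟩) ?_
    simpa using ih
  | @swap η b X Y w hi _ ih =>
    have := PCDerives.swap (G := subGrammar G H) (η := η.map (eI G H a))
      (β := b.map (eI G H a) ++ c) (X := eI G H a X) (Y := eI G H a Y) (w := w ++ v)
      (indep_eI.2 hi) (by simpa using ih)
    simpa using this

theorem sub_complete {α β : Type} [Finite α] {G : PCGrammar α} {H : α → PCGrammar β}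
    {c : List G.V} {l : List α} (h : PCDerives G c l) :
    ∀ parts : List (List β), List.Forall₂ (fun a u => u ∈ (H a).lang) l parts →
    PCDerives (subGrammar G H) (c.map (eO G H)) parts.flatten := by
  induction h with
  | nil =>
    intro parts hp
    cases hp
    exact PCDerives.nil
  | @prod X a γ b w hp _ ih =>
    intro parts hparts
    cases hparts with
    | @cons _ p _ ps h1 h2 =>
      obtain ⟨b', δ, u, rfl, hq, hd⟩ := PCDerives.single_inv h1
      refine PCDerives.prod (G := subGrammar G H) (prods_eO.2 ⟨_, _, _, hp, hq, rfl⟩) ?_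
      have := sub_complete_inner (G := G) hd (ih ps h2)
      simpa using this
  | @swap η b X Y w hi _ ih =>
    intro parts hparts
    have := PCDerives.swap (G := subGrammar G H) (η := η.map (eO G H))
      (β := b.map (eO G H)) (X := eO G H X) (Y := eO G H Y) (w := parts.flatten)
      (indep_eO.2 hi) (by simpa using ih parts hparts)
    simpa using this

theorem SubSem.swap {α β : Type} {G : PCGrammar α} {H : α → PCGrammar β} {η b : List G.V}
    {X Y : G.V} {w : List β} (hi : G.indep X Y) (h : SubSem G H (η ++ Y :: X :: b) w) :
    SubSem G H (η ++ X :: Y :: b) w := by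
  obtain ⟨l, h, r⟩ := h
  exact ⟨l, .swap hi h, r⟩

theorem sub_sound {α β : Type} [Finite α] {G : PCGrammar α} {H : α → PCGrammar β}
    {c : List (subGrammar G H).V} {w : List β} (h : PCDerives (subGrammar G H) c w) :
    ∀ (a : α) (δ : List (H a).V) (γ : List G.V), c = δ.map (eI G H a) ++ γ.map (eO G H) →
      ∃ u v, w = u ++ v ∧ PCDerives (H a) δ u ∧ SubSem G H γ v := by
  induction h with
  | nil =>
    intro a δ γ hc
    have hc := hc.symm
    simp only [List.append_eq_nil_iff, List.map_eq_nil_iff] at hc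
    obtain ⟨rfl, rfl⟩ := hc
    exact ⟨[], [], rfl, .nil, [], .nil, [], .nil, rfl⟩
  | @prod X b r rest w hp hd ih =>
    intro a δ γ hc
    cases δ with
    | cons Y δ' =>
      simp only [List.map_cons, List.cons_append, List.cons.injEq] at hc
      obtain ⟨rfl, rfl⟩ := hc
      obtain ⟨δ0, hq, rfl⟩ := prods_eI.1 hp
      obtain ⟨u, v, rfl, h1, h2⟩ := ih a (δ0 ++ δ') γ (by simp)
      exact ⟨b :: u, v, rfl, .prod hq h1, h2⟩
    | nil =>
      cases γ with
      | nil => simp at hc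
      | cons Y γ' =>
        simp only [List.map_nil, List.nil_append, List.map_cons, List.cons.injEq] at hc
        obtain ⟨rfl, rfl⟩ := hc
        obtain ⟨a', γ0, δ0, hq, hs, rfl⟩ := prods_eO.1 hp
        obtain ⟨u, v, rfl, h1, l, h2, parts, h3, rfl⟩ := ih a' δ0 (γ0 ++ γ') (by simp)
        refine ⟨[], _, rfl, .nil, a' :: l, .prod hq h2, (b :: u) :: parts, .cons ?_ h3, by simp⟩
        exact PCDerives.prod hs (by simpa using h1)
  | @swap η rest X Y w hi hd ih =>
    intro a δ γ hc
    rcases List.append_eq_append_iff.1 hc with ⟨m, h1, h2⟩ | ⟨m, h1, h2⟩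
    · obtain ⟨δ1, δ2, rfl, rfl, rfl⟩ := List.map_eq_append_iff.1 h1
      rcases δ2 with _ | ⟨Z, _ | ⟨Z', δ3⟩⟩
      · rcases γ with _ | ⟨A, _ | ⟨B, γ'⟩⟩
        · simp at h2
        · simp at h2
        · simp only [List.map_nil, List.nil_append, List.map_cons, List.cons.injEq] at h2
          obtain ⟨rfl, rfl, rfl⟩ := h2
          obtain ⟨u, v, rfl, h1, h2⟩ := ih a δ1 (B :: A :: γ') (by simp)
          have hi := indep_eO.1 hi
          exact ⟨u, v, rfl, by simpa using h1, h2.swap (η := []) hi⟩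
      · rcases γ with _ | ⟨A, γ'⟩
        · simp at h2
        · simp only [List.map_nil, List.nil_append, List.map_cons, List.cons_append,
            List.cons.injEq] at h2
          obtain ⟨rfl, rfl, rfl⟩ := h2
          exact absurd hi indep_eI_eO
      · simp only [List.map_cons, List.cons_append, List.cons.injEq] at h2
        obtain ⟨rfl, rfl, rfl⟩ := h2
        obtain ⟨u, v, rfl, h1, h2⟩ := ih a (δ1 ++ Z' :: Z :: δ3) γ (by simp)
        have hi := indep_eI.1 hi
        exact ⟨u, v, rfl, .swap hi h1, h2⟩
    · obtain ⟨γ1, γ2, rfl, rfl, h3⟩ := List.map_eq_append_iff.1 h2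
      rcases γ2 with _ | ⟨A, _ | ⟨B, γ'⟩⟩
      · simp at h3
      · simp at h3
      · simp only [List.map_cons, List.cons.injEq] at h3
        obtain ⟨rfl, rfl, rfl⟩ := h3
        subst h1
        obtain ⟨u, v, rfl, h1, h2⟩ := ih a δ (γ1 ++ B :: A :: γ') (by simp)
        have hi := indep_eO.1 hi
        exact ⟨u, v, rfl, h1, h2.swap hi⟩

theorem PCDerives.ne_of_isEmpty {α : Type} {G : PCGrammar α} {c : List G.V} {w : List α}
    (h : PCDerives G c w) (hG : G.prods = ∅) : c = [] := by
  induction h with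
  | nil => rfl
  | prod hp => simp [hG] at hp
  | swap _ _ ih => simp at ih

theorem subGrammar_lang {α β : Type} [Finite α] (G : PCGrammar α) (H : α → PCGrammar β) :
    (subGrammar G H).lang = {w | SubSem G H [G.start] w} := by
  ext w
  constructor
  · intro h
    rcases isEmpty_or_nonempty α with he | ⟨⟨a⟩⟩
    · have := PCDerives.ne_of_isEmpty h (by
        change subProds G H = ∅
        have : G.prods = ∅ := Set.eq_empty_of_forall_notMem fun p _ => he.elim p.2.1
        simp [subProds, this])
      simp at this
    · obtain ⟨u, v, rfl, h1, h2⟩ := sub_sound h a [] [G.start] rfl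
      cases u with
      | nil => exact h2
      | cons x u =>
        exfalso
        generalize hc : ([] : List (H a).V) = c at h1
        generalize hw : x :: u = w at h1
        cases h1 <;> simp at hc hw
  · rintro ⟨l, h, parts, hp, rfl⟩
    exact sub_complete h parts hp

theorem sub_closed {α β : Type} [Finite α] (L : Set (List α)) (hL : IsPCCFL L)
    (s : α → Set (List β)) (hs : ∀ a, IsPCCFL (s a)) :
    IsPCCFL {w | ∃ l ∈ L, ∃ parts : List (List β),
          List.Forall₂ (fun a u => u ∈ s a) l parts ∧ w = parts.flatten} := by
  obtain ⟨G, rfl⟩ := hL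
  choose H hH using hs
  obtain rfl : (fun a => (H a).lang) = s := funext hH
  exact ⟨subGrammar G H, subGrammar_lang G H⟩

def wordGrammar {β : Type} [Finite β] (b : β) (w : List β) : PCGrammar β where
  V := Option β
  finV := inferInstance
  start := none
  prods := {(none, b, w.map some)} ∪ Set.range fun c => (some c, c, [])
  finP := (Set.finite_singleton _).union (Set.finite_range _)
  indep := fun _ _ => False
  indep_symm := id
  indep_irrefl := fun _ => id

def eW {β : Type} [Finite β] (b : β) (w : List β) (c : β) : (wordGrammar b w).V := some c

theorem prods_eW {β : Type} [Finite β] {b : β} {w : List β} {x a : β}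
    {γ : List (wordGrammar b w).V} :
    (eW b w x, a, γ) ∈ (wordGrammar b w).prods ↔ a = x ∧ γ = [] := by
  constructor
  · rintro (h | ⟨c, h⟩)
    · cases h
    · cases h
      exact ⟨rfl, rfl⟩
  · rintro ⟨rfl, rfl⟩
    exact Or.inr ⟨_, rfl⟩

theorem prods_start {β : Type} [Finite β] {b : β} {w : List β} {a : β}
    {γ : List (wordGrammar b w).V} :
    ((wordGrammar b w).start, a, γ) ∈ (wordGrammar b w).prods ↔ a = b ∧ γ = w.map (eW b w) := by
  constructor
  · rintro (h | ⟨c, h⟩)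
    · cases h
      exact ⟨rfl, rfl⟩
    · cases h
  · rintro ⟨rfl, rfl⟩
    exact Or.inl rfl

theorem wordGrammar_sound {β : Type} [Finite β] {b : β} {w : List β}
    {c : List (wordGrammar b w).V} {u : List β} (h : PCDerives (wordGrammar b w) c u) :
    ∀ v : List β, c = v.map (eW b w) → u = v := by
  induction h with
  | nil =>
    intro v hv
    simpa using hv.symm
  | prod hp _ ih =>
    intro v hv
    cases v with
    | nil => simp at hv
    | cons x v =>
      simp only [List.map_cons, List.cons.injEq] at hv
      obtain ⟨rfl, rfl⟩ := hv
      obtain ⟨rfl, rfl⟩ := prods_eW.1 hp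
      rw [ih v rfl]
  | swap hi => exact hi.elim

theorem wordGrammar_complete {β : Type} [Finite β] {b : β} {w : List β} (v : List β) :
    PCDerives (wordGrammar b w) (v.map (eW b w)) v := by
  induction v with
  | nil => exact .nil
  | cons x v ih => exact PCDerives.prod (G := wordGrammar b w) (γ := []) (prods_eW.2 ⟨rfl, rfl⟩) ih

theorem isPCCFL_singleton {β : Type} [Finite β] (w : List β) (hw : w ≠ []) :
    IsPCCFL ({w} : Set (List β)) := by
  cases w with
  | nil => exact absurd rfl hw
  | cons b w =>
    refine ⟨wordGrammar b w, ?_⟩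
    ext u
    constructor
    · intro h
      obtain ⟨b', δ, v, rfl, hp, hd⟩ := PCDerives.single_inv h
      obtain ⟨rfl, rfl⟩ := prods_start.1 hp
      rw [wordGrammar_sound hd w rfl]
      rfl
    · rintro rfl
      refine PCDerives.prod (G := wordGrammar b w) (γ := w.map (eW b w)) (prods_start.2 ⟨rfl, rfl⟩) ?_
      have := wordGrammar_complete (b := b) (w := w) w
      simpa using this

/-- PCCFL is closed under ε-free substitutions; in particular it is
closed under images of homomorphisms `h` with `h a ≠ ε` for every letter `a`. -/
theorem pccfl_closed_under_substitution (α β : Type) [Finite α] [Finite β] :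
    (∀ (L : Set (List α)), IsPCCFL L →
      ∀ s : α → Set (List β), (∀ a, IsPCCFL (s a)) → (∀ a, [] ∉ s a) →
        IsPCCFL {w | ∃ l ∈ L, ∃ parts : List (List β),
          List.Forall₂ (fun a u => u ∈ s a) l parts ∧ w = parts.flatten}) ∧
    (∀ (L : Set (List α)), IsPCCFL L →
      ∀ h : α → List β, (∀ a, h a ≠ []) →
        IsPCCFL {w | ∃ l ∈ L, w = (l.map h).flatten}) := by
  refine ⟨fun L hL s hs _ => sub_closed L hL s hs, fun L hL h hh => ?_⟩
  have := sub_closed L hL (fun a => {h a}) (fun a => isPCCFL_singleton _ (hh a))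
  convert this using 1
  ext w
  have key : ∀ (l : List α) (parts : List (List β)),
      List.Forall₂ (fun a u => u ∈ ({h a} : Set (List β))) l parts ↔ parts = l.map h := by
    intro l
    induction l with
    | nil => simp
    | cons a l ih =>
      intro parts
      cases parts with
      | nil => simp
      | cons p ps => rw [List.forall₂_cons, ih]; simp
  simp only [Set.mem_ofPred_eq, key, exists_eq_left]
end
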